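/- arXiv:2603.24884 — 2 statements merged into one kernel-verified Lean document; each statement's English description precedes it below -/
import Mathlib

section
/- For every integer n ≥ 2, the ℚ-vector space OS_n^{S_n} of S_n-invariant elements of OS_n has dimension 2n. -/
noncomputable section

/-- Unordered pairs of distinct elements of `{1, …, n+1}` (as `Fin (n+1)`). -/
abbrev OSidx (n : ℕ) := {s : Sym2 (Fin (n+1)) // ¬ s.IsDiag}

/-- The exterior algebra over `ℚ` on generators indexed by unordered pairs of distinct
elements of `{1, …, n+1}`. -/
abbrev OSamb (n : ℕ) := ExteriorAlgebra ℚ (OSidx n →₀ ℚ)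

/-- The generator `e_{ij} = e_{ji}` of the ambient exterior algebra. -/
def eAmb (n : ℕ) (i j : Fin (n+1)) (h : i ≠ j) : OSamb n :=
  ExteriorAlgebra.ι ℚ (Finsupp.single ⟨s(i,j), by simp [Sym2.mk_isDiag_iff, h]⟩ 1)

/-- The Orlik–Solomon relations for the braid arrangement. -/
inductive OSRel (n : ℕ) : OSamb n → OSamb n → Prop
  | rel (i j k : Fin (n+1)) (hij : i ≠ j) (hjk : j ≠ k) (hik : i ≠ k) :
      OSRel n (eAmb n i k hik * eAmb n j k hjk - eAmb n i j hij * eAmb n j k hjk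
        + eAmb n i j hij * eAmb n i k hik) 0

/-- The Orlik–Solomon algebra `OS_n` of the braid arrangement `A_n`. -/
abbrev OS (n : ℕ) := RingQuot (OSRel n)

/-- The generator `e_{ij}` of `OS_n`, defined to be `0` when `i = j`. -/
def eOS (n : ℕ) (i j : Fin (n+1)) : OS n :=
  if h : i = j then 0 else RingQuot.mkAlgHom ℚ (OSRel n) (eAmb n i j h)

/-- `a = Σ_{1 ≤ i < j ≤ n} e_{ij}`. -/
def aOS (n : ℕ) : OS n :=
  ∑ p ∈ Finset.univ.filter (fun p : Fin n × Fin n => p.1 < p.2),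
    eOS n p.1.castSucc p.2.castSucc

/-- `m = Σ_{1 ≤ i ≤ n} e_{i,n+1}`. -/
def mOS (n : ℕ) : OS n := ∑ i : Fin n, eOS n i.castSucc (Fin.last n)

/-- `c = Σ_{1 ≤ i < j ≤ n} (e_{ij} e_{i,n+1} + e_{ij} e_{j,n+1})`. -/
def cOS (n : ℕ) : OS n :=
  ∑ p ∈ Finset.univ.filter (fun p : Fin n × Fin n => p.1 < p.2),
    (eOS n p.1.castSucc p.2.castSucc * eOS n p.1.castSucc (Fin.last n)
      + eOS n p.1.castSucc p.2.castSucc * eOS n p.2.castSucc (Fin.last n))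

/-- `g = a·m − p·c` with `p = ⌊(n+1)/2⌋`. -/
def gOS (n : ℕ) : OS n := aOS n * mOS n - ((n+1)/2 : ℕ) • cOS n

/-- The action of a permutation on the index set of unordered pairs. -/
def OSpermIdx (n : ℕ) (σ : Equiv.Perm (Fin (n+1))) : OSidx n → OSidx n :=
  fun s => ⟨Sym2.map σ s.1, by
    obtain ⟨⟨x, y⟩, hs⟩ := s
    intro hd
    rw [Sym2.map_pair_eq, Sym2.mk_isDiag_iff] at hd
    exact hs (Sym2.mk_isDiag_iff.mpr (σ.injective hd))⟩

/-- The algebra endomorphism of the ambient exterior algebra induced by a permutation. -/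
def OSpermAmb (n : ℕ) (σ : Equiv.Perm (Fin (n+1))) : OSamb n →ₐ[ℚ] OSamb n :=
  ExteriorAlgebra.lift ℚ
    ⟨(ExteriorAlgebra.ι ℚ).comp (Finsupp.lmapDomain ℚ ℚ (OSpermIdx n σ)),
      fun m => by simp [ExteriorAlgebra.ι_sq_zero]⟩

lemma OSpermAmb_e (n : ℕ) (σ : Equiv.Perm (Fin (n+1))) (i j : Fin (n+1)) (h : i ≠ j) :
    OSpermAmb n σ (eAmb n i j h) = eAmb n (σ i) (σ j) (fun hh => h (σ.injective hh)) := by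
  simp only [OSpermAmb, eAmb, ExteriorAlgebra.lift_ι_apply, LinearMap.comp_apply,
    Finsupp.lmapDomain_apply, Finsupp.mapDomain_single]
  congr 1

/-- The algebra endomorphism of `OS_n` induced by a permutation of `{1, …, n+1}`. -/
def OSperm (n : ℕ) (σ : Equiv.Perm (Fin (n+1))) : OS n →ₐ[ℚ] OS n :=
  RingQuot.liftAlgHom ℚ
    ⟨(RingQuot.mkAlgHom ℚ (OSRel n)).comp (OSpermAmb n σ), by
      intro x y h
      cases h with
      | rel i j k hij hjk hik =>
        simp only [AlgHom.comp_apply, map_sub, map_add, map_mul, map_zero, OSpermAmb_e]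
        have := RingQuot.mkAlgHom_rel ℚ (OSRel.rel (σ i) (σ j) (σ k)
          (fun hh => hij (σ.injective hh)) (fun hh => hjk (σ.injective hh))
          (fun hh => hik (σ.injective hh)))
        simpa [map_sub, map_add, map_mul] using this⟩

/-- The subalgebra of `S_n`-invariants of `OS_n`, where `S_n` is the subgroup of permutations
of `{1, …, n+1}` fixing `n+1`. -/
def OSinv (n : ℕ) : Subalgebra ℚ (OS n) where
  carrier := {x | ∀ σ : Equiv.Perm (Fin (n+1)), σ (Fin.last n) = Fin.last n → OSperm n σ x = x}
  mul_mem' := fun hx hy σ hσ => by rw [map_mul, hx σ hσ, hy σ hσ]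
  add_mem' := fun hx hy σ hσ => by rw [map_add, hx σ hσ, hy σ hσ]
  one_mem' := fun σ _ => map_one _
  zero_mem' := fun σ _ => map_zero _
  algebraMap_mem' := fun r σ hσ => AlgHom.commutes _ r

/-- The subalgebra of `S_{n+1}`-invariants of `OS_n`. -/
def OSinvFull (n : ℕ) : Subalgebra ℚ (OS n) where
  carrier := {x | ∀ σ : Equiv.Perm (Fin (n+1)), OSperm n σ x = x}
  mul_mem' := fun hx hy σ => by rw [map_mul, hx σ, hy σ]
  add_mem' := fun hx hy σ => by rw [map_add, hx σ, hy σ]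
  one_mem' := fun σ => map_one _
  zero_mem' := fun σ => map_zero _
  algebraMap_mem' := fun r σ => AlgHom.commutes _ r

/-- The degree-`d` graded piece of `OS_n`: the image in `OS_n` of the degree-`d` component of
the exterior algebra. -/
def OSdeg (n : ℕ) (d : ℕ) : Submodule ℚ (OS n) :=
  Submodule.map (RingQuot.mkAlgHom ℚ (OSRel n)).toLinearMap
    ((LinearMap.range (ExteriorAlgebra.ι ℚ : (OSidx n →₀ ℚ) →ₗ[ℚ] OSamb n)) ^ d)

/-- The degree-`d` graded piece of the invariant subalgebra `OS_n^{S_n}`. -/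
def OSinvDeg (n : ℕ) (d : ℕ) : Submodule ℚ (OS n) :=
  Subalgebra.toSubmodule (OSinv n) ⊓ OSdeg n d


namespace OSP
variable {n : ℕ}

lemma e_symm (i j : Fin (n+1)) : eOS n i j = eOS n j i := by
  unfold eOS
  by_cases h : i = j
  · subst h; rfl
  · have h' : ¬ j = i := fun hh => h hh.symm
    rw [dif_neg h, dif_neg h']
    congr 1
    unfold eAmb
    congr 3
    exact Sym2.eq_swap

lemma e_self (i : Fin (n+1)) : eOS n i i = 0 := by simp [eOS]

lemma e_sq (i j : Fin (n+1)) : eOS n i j * eOS n i j = 0 := by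
  unfold eOS
  split_ifs with h
  · simp
  · rw [← map_mul, eAmb, ExteriorAlgebra.ι_sq_zero, map_zero]

lemma e_anti (i j k l : Fin (n+1)) : eOS n i j * eOS n k l = -(eOS n k l * eOS n i j) := by
  unfold eOS
  split_ifs with h h' h'
  · simp
  · simp
  · simp
  · rw [← map_mul, ← map_mul, ← map_neg]
    congr 1
    exact eq_neg_of_add_eq_zero_left (ExteriorAlgebra.ι_add_mul_swap _ _)

lemma e_rel (i j k : Fin (n+1)) :
    eOS n i k * eOS n j k - eOS n i j * eOS n j k + eOS n i j * eOS n i k = 0 := by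
  by_cases hij : i = j
  · subst hij; simp [e_self, e_sq]
  by_cases hjk : j = k
  · subst hjk; simp [e_self, e_sq]
  by_cases hik : i = k
  · subst hik; rw [e_symm j i]; simp [e_self, e_sq]
  have := RingQuot.mkAlgHom_rel ℚ (OSRel.rel i j k hij hjk hik)
  simpa [eOS, hij, hjk, hik] using this

/-- the rearranged relation -/
lemma e_rel' (c v w : Fin (n+1)) :
    eOS n c v * eOS n v w - eOS n c w * eOS n v w = eOS n v c * eOS n c w := by
  have := e_rel c v w
  rw [e_symm v c]
  have h2 : eOS n c v * eOS n v w - eOS n c w * eOS n v w - eOS n c v * eOS n c w = 0 := by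
    rw [← neg_eq_zero, ← this]; abel
  exact sub_eq_zero.mp h2

lemma perm_e (σ : Equiv.Perm (Fin (n+1))) (i j : Fin (n+1)) :
    OSperm n σ (eOS n i j) = eOS n (σ i) (σ j) := by
  unfold eOS
  by_cases h : i = j
  · simp [h]
  · have h' : ¬ σ i = σ j := fun hh => h (σ.injective hh)
    rw [dif_neg h, dif_neg h', OSperm, RingQuot.liftAlgHom_mkAlgHom_apply, AlgHom.comp_apply,
      OSpermAmb_e]

/-- generation -/
lemma gen (p : Submodule ℚ (OS n)) (h1 : (1 : OS n) ∈ p)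
    (he : ∀ i j, ∀ y ∈ p, eOS n i j * y ∈ p) (x : OS n) : x ∈ p := by
  obtain ⟨x, rfl⟩ := RingQuot.mkAlgHom_surjective ℚ (OSRel n) x
  suffices H : ∀ y ∈ p, RingQuot.mkAlgHom ℚ (OSRel n) x * y ∈ p by
    simpa using H 1 h1
  induction x using ExteriorAlgebra.induction with
  | algebraMap r =>
    intro y hy
    rw [AlgHom.commutes, ← Algebra.smul_def]
    exact p.smul_mem _ hy
  | ι f =>
    intro y hy
    induction f using Finsupp.induction_linear with
    | zero => simp
    | add f g hf hg => rw [map_add, map_add, add_mul]; exact p.add_mem hf hg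
    | single s r =>
      obtain ⟨s, hs⟩ := s
      induction s using Sym2.ind with
      | _ i j =>
      have hij : i ≠ j := by simpa using hs
      have : (Finsupp.single (⟨s(i,j), hs⟩ : OSidx n) r) = r • Finsupp.single ⟨s(i,j), hs⟩ 1 := by
        simp
      rw [this, map_smul, map_smul, smul_mul_assoc]
      apply p.smul_mem
      have := he i j y hy
      rwa [eOS, dif_neg hij, eAmb] at this
  | mul a b ha hb =>
    intro y hy
    rw [map_mul, mul_assoc]
    exact ha _ (hb _ hy)
  | add a b ha hb =>
    intro y hy
    rw [map_add, add_mul]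
    exact p.add_mem (ha _ hy) (hb _ hy)

lemma algHom_ext' {B : Type*} [Ring B] [Algebra ℚ B] (f g : OS n →ₐ[ℚ] B)
    (h : ∀ i j, f (eOS n i j) = g (eOS n i j)) : f = g := by
  refine AlgHom.ext fun x => ?_
  exact gen (LinearMap.eqLocus f.toLinearMap g.toLinearMap) (by simp [LinearMap.mem_eqLocus])
    (by
      intro i j y hy
      simp only [LinearMap.mem_eqLocus, AlgHom.toLinearMap_apply, map_mul] at hy ⊢
      rw [h, hy]) x

lemma perm_mul (σ τ : Equiv.Perm (Fin (n+1))) (x : OS n) :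
    OSperm n (σ * τ) x = OSperm n σ (OSperm n τ x) := by
  have : OSperm n (σ * τ) = (OSperm n σ).comp (OSperm n τ) := by
    apply algHom_ext'
    intro i j
    simp [perm_e]
  rw [this]; rfl

lemma perm_one (x : OS n) : OSperm n 1 x = x := by
  have : OSperm n 1 = AlgHom.id ℚ _ := by
    apply algHom_ext'
    intro i j
    simp [perm_e]
  rw [this]; rfl

/-- the group fixing the root -/
def G (n : ℕ) : Finset (Equiv.Perm (Fin (n+1))) :=
  Finset.univ.filter (fun σ => σ (Fin.last n) = Fin.last n)

/-- the symmetrization operator -/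
def A (n : ℕ) : OS n →ₗ[ℚ] OS n := ∑ σ ∈ G n, (OSperm n σ).toLinearMap

lemma A_apply (x : OS n) : A n x = ∑ σ ∈ G n, OSperm n σ x := by
  simp [A]

lemma A_perm (τ : Equiv.Perm (Fin (n+1))) (hτ : τ (Fin.last n) = Fin.last n) (x : OS n) :
    A n (OSperm n τ x) = A n x := by
  rw [A_apply, A_apply]
  refine Finset.sum_equiv (Equiv.mulRight τ) ?_ ?_
  · intro σ; simp [G, hτ]
  · intro σ _; simp [perm_mul]

lemma A_mem (x : OS n) : A n x ∈ OSinv n := by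
  intro τ hτ
  rw [A_apply, map_sum]
  refine Finset.sum_equiv (Equiv.mulLeft τ) ?_ ?_
  · intro σ
    simp only [G, Finset.mem_filter, Finset.mem_univ, true_and, Equiv.coe_mulLeft,
      Equiv.Perm.mul_apply]
    constructor
    · intro h; rw [h, hτ]
    · intro h; apply τ.injective; rw [h, hτ]
  · intro σ _; simp [perm_mul]

lemma A_inv (x : OS n) (hx : x ∈ OSinv n) : A n x = ((G n).card : ℚ) • x := by
  rw [A_apply, Finset.sum_congr rfl (g := fun _ => x)]
  · simp [Nat.cast_smul_eq_nsmul]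
  · intro σ hσ
    exact hx σ (by simpa [G] using hσ)

lemma G_card_ne : ((G n).card : ℚ) ≠ 0 := by
  have : (1 : Equiv.Perm (Fin (n+1))) ∈ G n := by simp [G]
  have := Finset.card_pos.mpr ⟨_, this⟩
  positivity

/-- path monomials -/
def ch (n : ℕ) : List (Fin (n+1)) → OS n
  | [] => 1
  | [_] => 1
  | a :: b :: l => eOS n a b * ch n (b :: l)

@[simp] lemma ch_nil : ch n [] = 1 := rfl
@[simp] lemma ch_single (a : Fin (n+1)) : ch n [a] = 1 := rfl
@[simp] lemma ch_cons (a b : Fin (n+1)) (l) : ch n (a :: b :: l) = eOS n a b * ch n (b :: l) := rfl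

lemma ch_append (P : List (Fin (n+1))) (v) (Q) :
    ch n (P ++ v :: Q) = ch n (P ++ [v]) * ch n (v :: Q) := by
  induction P with
  | nil => simp
  | cons a P ih =>
    cases P with
    | nil => simp
    | cons b P =>
      simp only [List.cons_append, ch_cons] at ih ⊢
      rw [ih, mul_assoc]

lemma ch_comm (P : List (Fin (n+1))) (v i j : Fin (n+1)) :
    ch n (P ++ [v]) * eOS n i j = (-1 : ℚ) ^ P.length • (eOS n i j * ch n (P ++ [v])) := by
  induction P with
  | nil => simp
  | cons a P ih =>
    have key : ∀ b, (eOS n a b * ch n (P ++ [v])) * eOS n i j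
        = (-1 : ℚ) ^ (P.length + 1) • (eOS n i j * (eOS n a b * ch n (P ++ [v]))) := by
      intro b
      rw [mul_assoc, ih, mul_smul_comm, ← mul_assoc, e_anti a b i j, pow_succ]
      simp [mul_assoc]
    cases P with
    | nil => simpa using key v
    | cons b P => simpa using key b

lemma perm_ch (σ : Equiv.Perm (Fin (n+1))) (L : List (Fin (n+1))) :
    OSperm n σ (ch n L) = ch n (L.map σ) := by
  induction L with
  | nil => simp
  | cons a L ih =>
    cases L with
    | nil => simp
    | cons b L => simpa [perm_e] using congrArg (eOS n (σ a) (σ b) * ·) ih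

/-- equality up to scalar -/
def Sc (x y : OS n) : Prop := ∃ c : ℚ, x = c • y

lemma Sc.refl (x : OS n) : Sc x x := ⟨1, by simp⟩
lemma Sc.trans {x y z : OS n} (h : Sc x y) (h' : Sc y z) : Sc x z := by
  obtain ⟨c, rfl⟩ := h
  obtain ⟨d, rfl⟩ := h'
  exact ⟨c * d, by rw [mul_smul]⟩
lemma Sc.mul_left {x y : OS n} (h : Sc x y) (z : OS n) : Sc (z * x) (z * y) := by
  obtain ⟨c, rfl⟩ := h
  exact ⟨c, by simp⟩
lemma Sc.mul_right {x y : OS n} (h : Sc x y) (z : OS n) : Sc (x * z) (y * z) := by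
  obtain ⟨c, rfl⟩ := h
  exact ⟨c, by simp⟩
lemma Sc.mem {x y : OS n} (h : Sc x y) {p : Submodule ℚ (OS n)} (hy : y ∈ p) : x ∈ p := by
  obtain ⟨c, rfl⟩ := h
  exact p.smul_mem _ hy

lemma e_anti_Sc (i j k l : Fin (n+1)) : Sc (eOS n i j * eOS n k l) (eOS n k l * eOS n i j) :=
  ⟨-1, by rw [e_anti]; simp⟩

lemma ch_e_Sc (L : List (Fin (n+1))) (i j : Fin (n+1)) :
    Sc (ch n L * eOS n i j) (eOS n i j * ch n L) := by
  rcases List.eq_nil_or_concat L with rfl | ⟨P, v, rfl⟩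
  · exact ⟨1, by simp⟩
  · exact ⟨_, by simpa using ch_comm P v i j⟩

lemma e_ch_Sc (L : List (Fin (n+1))) (i j : Fin (n+1)) :
    Sc (eOS n i j * ch n L) (ch n L * eOS n i j) := by
  induction L with
  | nil => exact ⟨1, by simp⟩
  | cons a L ih =>
    cases L with
    | nil => exact ⟨1, by simp⟩
    | cons b L =>
      have h1 := (e_anti_Sc i j a b).mul_right (ch n (b :: L))
      have h2 := ih.mul_left (eOS n a b)
      simp only [ch_cons, mul_assoc] at h1 h2 ⊢
      exact h1.trans h2

lemma ch_ch_Sc (L L' : List (Fin (n+1))) : Sc (ch n L * ch n L') (ch n L' * ch n L) := by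
  induction L' with
  | nil => exact ⟨1, by simp⟩
  | cons a L' ih =>
    cases L' with
    | nil => exact ⟨1, by simp⟩
    | cons b L' =>
      have h1 := (ch_e_Sc L a b).mul_right (ch n (b :: L'))
      have h2 := ih.mul_left (eOS n a b)
      simp only [ch_cons, mul_assoc] at h1 h2 ⊢
      exact h1.trans h2

lemma ch_reverse (L : List (Fin (n+1))) : Sc (ch n L.reverse) (ch n L) := by
  induction L with
  | nil => exact Sc.refl _
  | cons a L ih =>
    cases L with
    | nil => exact Sc.refl _
    | cons b L =>
      have : (a :: b :: L).reverse = L.reverse ++ b :: [a] := by simp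
      rw [this, ch_append]
      have h1 := ih.mul_right (eOS n b a)
      have h2 := ch_e_Sc (b :: L) b a
      rw [List.reverse_cons] at h1
      simp only [ch_cons, ch_single, mul_one]
      rw [e_symm a b]
      exact h1.trans h2

end OSP

namespace OSP
variable {n : ℕ}

lemma e_ch_zero (L : List (Fin (n+1))) : ∀ (i j : Fin (n+1)), j ∈ L →
    eOS n i j * ch n (i :: L) = 0 := by
  induction L with
  | nil => intro i j h; simp at h
  | cons a L ih =>
    intro i j h
    rw [ch_cons, ← mul_assoc]
    by_cases hja : j = a
    · subst hja; rw [e_sq, zero_mul]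
    · have hj : j ∈ L := by simpa [hja] using h
      have h1 := e_rel' i j a
      rw [e_symm i j, ← h1, sub_mul, mul_assoc, mul_assoc, e_symm j a, ih a j hj]
      simp

lemma e_ch_zero_aux (P Q : List (Fin (n+1))) (i j : Fin (n+1)) (h : j ∈ Q) :
    eOS n i j * ch n (P ++ i :: Q) = 0 := by
  rw [ch_append, ← mul_assoc]
  obtain ⟨c, hc⟩ := e_ch_Sc (P ++ [i]) i j
  rw [hc, smul_mul_assoc, mul_assoc, e_ch_zero Q i j h]
  simp

lemma e_ch_zero' (L : List (Fin (n+1))) (i j : Fin (n+1)) (hij : i ≠ j) (hi : i ∈ L)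
    (hj : j ∈ L) : eOS n i j * ch n L = 0 := by
  obtain ⟨P, Q, rfl⟩ := List.append_of_mem hi
  have : j ∈ P ∨ j ∈ Q := by
    simp only [List.mem_append, List.mem_cons] at hj
    rcases hj with h | h | h
    · exact Or.inl h
    · exact absurd h.symm hij
    · exact Or.inr h
  rcases this with h | h
  · obtain ⟨P, P', rfl⟩ := List.append_of_mem h
    rw [e_symm]
    have := e_ch_zero_aux P (P' ++ i :: Q) j i (by simp)
    simpa using this
  · exact e_ch_zero_aux P Q i j h

/-- span of chains on the vertices of `L` starting with `v` -/
def RS (n : ℕ) (v : Fin (n+1)) (L : List (Fin (n+1))) : Submodule ℚ (OS n) :=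
  Submodule.span ℚ {x | ∃ B : List (Fin (n+1)), (v :: B).Perm L ∧ x = ch n (v :: B)}

lemma RS_perm {v : Fin (n+1)} {L L' : List (Fin (n+1))} (h : L.Perm L') : RS n v L ≤ RS n v L' := by
  apply Submodule.span_mono
  rintro x ⟨B, hB, rfl⟩
  exact ⟨B, hB.trans h, rfl⟩

lemma RS_cons (v a : Fin (n+1)) (L : List (Fin (n+1))) (x : OS n) (hx : x ∈ RS n a L) :
    eOS n v a * x ∈ RS n v (v :: L) := by
  have : RS n a L ≤ (RS n v (v :: L)).comap (LinearMap.mulLeft ℚ (eOS n v a)) := by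
    refine Submodule.span_le.mpr ?_
    rintro x ⟨B, hB, rfl⟩
    exact Submodule.subset_span ⟨a :: B, hB.cons v, rfl⟩
  exact this hx

lemma shuffle (N : ℕ) : ∀ (v : Fin (n+1)) (B C : List (Fin (n+1))), B.length + C.length = N →
    ch n (v :: B) * ch n (v :: C) ∈ RS n v (v :: (B ++ C)) := by
  induction N with
  | zero =>
    intro v B C h
    have hB : B = [] := List.length_eq_zero_iff.mp (by omega)
    have hC : C = [] := List.length_eq_zero_iff.mp (by omega)
    subst hB hC
    exact Submodule.subset_span ⟨[], List.Perm.refl _, by simp⟩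
  | succ N ih =>
    intro v B C h
    cases B with
    | nil => exact Submodule.subset_span ⟨C, List.Perm.refl _, by simp⟩
    | cons a B =>
    cases C with
    | nil => exact Submodule.subset_span ⟨a :: B, by simp, by simp⟩
    | cons b C =>
    have key : eOS n v a * eOS n v b = eOS n v a * eOS n a b - eOS n v b * eOS n a b := by
      rw [e_rel' v a b, e_symm v a]
    have t1 : Sc (ch n (v :: a :: B) * ch n (v :: b :: C))
        (eOS n v a * eOS n v b * (ch n (a :: B) * ch n (b :: C))) := by
      have := ((ch_e_Sc (a :: B) v b).mul_right (ch n (b :: C))).mul_left (eOS n v a)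
      simpa [mul_assoc] using this
    refine t1.mem ?_
    rw [key, sub_mul]
    refine Submodule.sub_mem _ ?_ ?_
    · have h1 := ih a B (b :: C) (by simp at h ⊢; omega)
      have h2 : Sc (eOS n a b * (ch n (a :: B) * ch n (b :: C)))
          (ch n (a :: B) * ch n (a :: b :: C)) := by
        have := (e_ch_Sc (a :: B) a b).mul_right (ch n (b :: C))
        simpa [mul_assoc] using this
      have h3 := RS_cons v a _ _ (h2.mem h1)
      rw [mul_assoc]
      exact h3
    · have h1 := ih b (a :: B) C (by simp at h ⊢; omega)
      have h2 : eOS n a b * (ch n (a :: B) * ch n (b :: C)) = ch n (b :: a :: B) * ch n (b :: C) := by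
        rw [ch_cons, e_symm a b, mul_assoc]
      have h3 := RS_cons v b _ _ h1
      rw [mul_assoc, h2]
      refine RS_perm ?_ h3
      refine List.Perm.cons v ?_
      exact (List.perm_middle (l₁ := a :: B)).symm

lemma reroot (v : Fin (n+1)) (L : List (Fin (n+1))) (h : v ∈ L) : ch n L ∈ RS n v L := by
  obtain ⟨P, Q, rfl⟩ := List.append_of_mem h
  rw [ch_append]
  have h1 := ch_reverse (v :: P.reverse)
  have h2 : (v :: P.reverse).reverse = P ++ [v] := by simp
  rw [h2] at h1
  refine (h1.mul_right _).mem ?_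
  refine RS_perm ?_ (shuffle _ v P.reverse Q rfl)
  have : (v :: (P.reverse ++ Q)).Perm (v :: (P ++ Q)) :=
    ((List.reverse_perm P).append_right Q).cons v
  exact this.trans List.perm_middle.symm

/-- forest monomials -/
def Mon (n : ℕ) (LL : List (List (Fin (n+1)))) : OS n := (LL.map (ch n)).prod

@[simp] lemma Mon_nil : Mon n [] = 1 := rfl
@[simp] lemma Mon_cons (L) (LL : List (List (Fin (n+1)))) :
    Mon n (L :: LL) = ch n L * Mon n LL := by simp [Mon]

lemma Mon_perm {LL LL' : List (List (Fin (n+1)))} (h : LL.Perm LL') :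
    Sc (Mon n LL) (Mon n LL') := by
  induction h with
  | nil => exact Sc.refl _
  | cons x _ ih => simpa using ih.mul_left _
  | swap x y l => simpa [mul_assoc] using (ch_ch_Sc y x).mul_right (Mon n l)
  | trans _ _ h1 h2 => exact h1.trans h2

/-- span of forest monomials -/
def FS (n : ℕ) : Submodule ℚ (OS n) :=
  Submodule.span ℚ {x | ∃ LL : List (List (Fin (n+1))),
    LL.flatten.Perm (List.finRange (n+1)) ∧ x = Mon n LL}

lemma one_mem_FS : (1 : OS n) ∈ FS n := by
  refine Submodule.subset_span ⟨(List.finRange (n+1)).map (fun x => [x]), ?_, ?_⟩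
  · rw [← List.flatMap_def]; simp
  · generalize List.finRange (n+1) = l
    induction l with
    | nil => simp
    | cons a l ih => simpa using ih

lemma join_mem (i j : Fin (n+1)) (L L' : List (Fin (n+1))) (LL : List (List (Fin (n+1))))
    (h : (L :: L' :: LL).flatten.Perm (List.finRange (n+1))) (x y : OS n)
    (hx : x ∈ RS n i L) (hy : y ∈ RS n j L') : eOS n i j * (x * (y * Mon n LL)) ∈ FS n := by
  unfold RS at hx hy
  induction hx using Submodule.span_induction with
  | zero => simp
  | add a b _ _ ha hb => rw [add_mul, mul_add]; exact Submodule.add_mem _ ha hb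
  | smul c a _ ha => rw [smul_mul_assoc, mul_smul_comm]; exact Submodule.smul_mem _ _ ha
  | mem x hx =>
  obtain ⟨B, hB, rfl⟩ := hx
  induction hy using Submodule.span_induction with
  | zero => simp
  | add a b _ _ ha hb => rw [add_mul, mul_add, mul_add]; exact Submodule.add_mem _ ha hb
  | smul c a _ ha =>
    rw [smul_mul_assoc, mul_smul_comm, mul_smul_comm]; exact Submodule.smul_mem _ _ ha
  | mem y hy =>
  obtain ⟨C, hC, rfl⟩ := hy
  have h1 : Sc (ch n (i :: B)) (ch n (B.reverse ++ [i])) := by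
    have := ch_reverse (B.reverse ++ [i])
    simpa using this
  have h2 : Sc (eOS n i j * (ch n (i :: B) * (ch n (j :: C) * Mon n LL)))
      (Mon n ((B.reverse ++ i :: j :: C) :: LL)) := by
    rw [Mon_cons, ch_append, ch_cons]
    have a1 := (h1.mul_right (ch n (j :: C) * Mon n LL)).mul_left (eOS n i j)
    have a2 := (e_ch_Sc (B.reverse ++ [i]) i j).mul_right (ch n (j :: C) * Mon n LL)
    simp only [mul_assoc] at a1 a2 ⊢
    exact a1.trans a2
  refine h2.mem (Submodule.subset_span ⟨_, ?_, rfl⟩)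
  refine List.Perm.trans ?_ h
  simp only [List.flatten_cons]
  rw [← List.append_assoc L]
  refine List.Perm.append_right _ ?_
  have : (B.reverse ++ i :: j :: C) = (B.reverse ++ [i]) ++ (j :: C) := by simp
  rw [this]
  refine List.Perm.append ?_ hC
  refine List.Perm.trans ?_ hB
  have := List.reverse_perm (i :: B)
  simpa using this

lemma FS_mul (i j : Fin (n+1)) (y : OS n) (hy : y ∈ FS n) : eOS n i j * y ∈ FS n := by
  by_cases hij : i = j
  · subst hij; simp [e_self]
  unfold FS at hy
  induction hy using Submodule.span_induction with
  | zero => simp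
  | add a b _ _ ha hb => rw [mul_add]; exact Submodule.add_mem _ ha hb
  | smul c a _ ha => rw [mul_smul_comm]; exact Submodule.smul_mem _ _ ha
  | mem y hy =>
  obtain ⟨LL, hLL, rfl⟩ := hy
  obtain ⟨L, hL, hiL⟩ := List.mem_flatten.mp (hLL.mem_iff.mpr (List.mem_finRange i))
  have p1 := List.perm_cons_erase hL
  refine ((Mon_perm p1).mul_left _).mem ?_
  by_cases hj : j ∈ L
  · rw [Mon_cons, ← mul_assoc, e_ch_zero' L i j hij hiL hj]; simp
  have q1 : (L :: LL.erase L).flatten.Perm (List.finRange (n+1)) := (p1.flatten.symm).trans hLL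
  have hj' : j ∈ (LL.erase L).flatten := by
    have := q1.mem_iff.mpr (List.mem_finRange j)
    rw [List.flatten_cons, List.mem_append] at this
    exact this.resolve_left hj
  obtain ⟨L', hL', hjL'⟩ := List.mem_flatten.mp hj'
  have p2 := List.perm_cons_erase hL'
  rw [Mon_cons]
  refine (((Mon_perm p2).mul_left _).mul_left _).mem ?_
  rw [Mon_cons]
  exact join_mem i j L L' _ (((p2.cons L).flatten.symm).trans q1) _ _ (reroot i L hiL)
    (reroot j L' hjL')

lemma mem_FS (x : OS n) : x ∈ FS n := gen _ one_mem_FS FS_mul x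

end OSP

namespace OSP
variable {n : ℕ}

lemma exists_perm {α : Type*} [DecidableEq α] {L L' : List α} (h : L.Perm L') (hn : L.Nodup) :
    ∃ σ : Equiv.Perm α, (∀ x, x ∉ L → σ x = x) ∧ L.map σ = L' := by
  induction h with
  | nil => exact ⟨1, by simp, by simp⟩
  | cons a h ih =>
    rw [List.nodup_cons] at hn
    obtain ⟨σ, h1, h2⟩ := ih hn.2
    refine ⟨σ, ?_, ?_⟩
    · intro x hx
      exact h1 x (fun hh => hx (List.mem_cons_of_mem _ hh))
    · rw [List.map_cons, h2, h1 a hn.1]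
  | swap a b l =>
    refine ⟨Equiv.swap a b, ?_, ?_⟩
    · intro x hx
      simp only [List.mem_cons, not_or] at hx
      exact Equiv.swap_apply_of_ne_of_ne hx.2.1 hx.1
    · simp only [List.nodup_cons, List.mem_cons, not_or] at hn
      simp only [List.map_cons, Equiv.swap_apply_right, Equiv.swap_apply_left, List.cons.injEq,
        true_and]
      conv_rhs => rw [← List.map_id l]
      refine List.map_congr_left ?_
      intro x hx
      refine Equiv.swap_apply_of_ne_of_ne ?_ ?_
      · rintro rfl; exact hn.2.1 hx
      · rintro rfl; exact hn.1.2 hx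
  | trans h h' ih ih' =>
    obtain ⟨σ, h1, h2⟩ := ih hn
    obtain ⟨τ, h3, h4⟩ := ih' (h.nodup_iff.mp hn)
    refine ⟨τ * σ, ?_, ?_⟩
    · intro x hx
      rw [Equiv.Perm.mul_apply, h1 x hx, h3 x (fun hh => hx (h.mem_iff.mpr hh))]
    · rw [← h4, ← h2, List.map_map]; rfl

lemma exists_perm' (L L' : List (Fin (n+1))) (hn : L.Nodup) (hn' : L'.Nodup)
    (hl : L.length = L'.length) : ∃ σ : Equiv.Perm (Fin (n+1)), L.map σ = L' := by
  have comp : ∀ L : List (Fin (n+1)), L.Nodup →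
      ∃ R : List (Fin (n+1)), (L ++ R).Perm (List.finRange (n+1)) := by
    intro L hL
    have : L.Subperm (List.finRange (n+1)) := hL.subperm (fun x _ => List.mem_finRange x)
    exact ⟨_, List.subperm_append_diff_self_of_count_le
      (fun x _ => this.count_le x)⟩
  obtain ⟨R, hR⟩ := comp L hn
  obtain ⟨R', hR'⟩ := comp L' hn'
  obtain ⟨σ, -, h⟩ := exists_perm (hR.trans hR'.symm) (hR.nodup_iff.mpr (List.nodup_finRange _))
  rw [List.map_append] at h
  exact ⟨σ, (List.append_inj h (by simpa using hl)).1⟩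

lemma T_formula (L0 : List (Fin (n+1))) (R π : OS n)
    (H : ∀ L : List (Fin (n+1)), L.Perm L0 → A n (ch n L * R) = π) (P : List (Fin (n+1))) :
    ∀ (c v : Fin (n+1)) (Q : List (Fin (n+1))), (c :: (P ++ v :: Q)).Perm L0 →
    A n (eOS n c v * ch n (P ++ v :: Q) * R) = ((1 + (-1 : ℚ) ^ P.length) / 2) • π := by
  induction P using List.reverseRecOn with
  | nil =>
    intro c v Q h
    have := H _ h
    simpa using this
  | append_singleton P u ih =>
    intro c v Q h
    have h1 := ih c u (v :: Q) (by simpa using h)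
    have h2 := H (P ++ u :: c :: v :: Q) (by
      refine List.Perm.trans ?_ h
      have : (P ++ [u]) ++ c :: (v :: Q) = P ++ u :: c :: v :: Q := by simp
      rw [← this]
      exact List.perm_middle)
    have key : eOS n c v * ch n (P ++ [u] ++ v :: Q) * R = eOS n c u * ch n (P ++ u :: v :: Q) * R
        - (-1 : ℚ) ^ P.length • (ch n (P ++ u :: c :: v :: Q) * R) := by
      have e0 : P ++ [u] ++ v :: Q = P ++ u :: v :: Q := by simp
      rw [e0, eq_sub_iff_add_eq', ← eq_sub_iff_add_eq, ← sub_mul, ← sub_mul]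
      rw [ch_append P u (c :: v :: Q), ch_append P u (v :: Q), ch_cons, ch_cons, ch_cons]
      rw [← smul_mul_assoc]
      congr 1
      have r := e_rel' c u v
      rw [← mul_assoc (eOS n u c), ← r]
      rw [← mul_assoc, ← mul_assoc (ch n (P ++ [u])), ← smul_mul_assoc, mul_sub,
        ← mul_assoc (ch n (P ++ [u])), ← mul_assoc (ch n (P ++ [u])), ch_comm P u c u,
        ch_comm P u c v]
      rw [← mul_assoc]
      congr 1
      simp only [sub_mul, smul_sub, smul_mul_assoc, smul_smul, ← pow_add, mul_assoc]
      simp [← two_mul]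
    rw [key, map_sub, map_smul, h1, h2, ← sub_smul]
    congr 1
    simp [pow_succ]
    ring

lemma L_formula (L0 : List (Fin (n+1))) (R π : OS n)
    (H : ∀ L : List (Fin (n+1)), L.Perm L0 → A n (ch n L * R) = π) (P : List (Fin (n+1))) :
    ∀ (a b v : Fin (n+1)) (Q : List (Fin (n+1))), (a :: b :: (P ++ v :: Q)).Perm L0 →
    A n (eOS n a b * (eOS n b v * ch n (P ++ v :: Q)) * R)
      = ((2 * P.length + 3 + (-1 : ℚ) ^ P.length) / 4) • π := by
  induction P using List.reverseRecOn with
  | nil =>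
    intro a b v Q h
    have := H _ h
    norm_num
    simpa [mul_assoc] using this
  | append_singleton P u ih =>
    intro a b v Q h
    have h1 := ih a b u (v :: Q) (by simpa using h)
    have h2 := T_formula L0 R π H (P ++ [u]) a b (v :: Q) (by
      refine List.Perm.trans ?_ h
      exact List.perm_middle.cons a)
    have key : eOS n b v * ch n (P ++ [u] ++ v :: Q) = eOS n b u * ch n (P ++ u :: v :: Q)
        - (-1 : ℚ) ^ P.length • (ch n (P ++ [u] ++ b :: v :: Q)) := by
      have e0 : P ++ [u] ++ v :: Q = P ++ u :: v :: Q := by simp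
      have e1 : P ++ [u] ++ b :: v :: Q = P ++ u :: b :: v :: Q := by simp
      rw [e0, e1, eq_sub_iff_add_eq', ← eq_sub_iff_add_eq, ← sub_mul]
      rw [ch_append P u (b :: v :: Q), ch_append P u (v :: Q), ch_cons, ch_cons, ch_cons]
      have r := e_rel' b u v
      rw [← mul_assoc (eOS n u b), ← r]
      rw [← mul_assoc, ← mul_assoc (ch n (P ++ [u])), ← smul_mul_assoc, mul_sub,
        ← mul_assoc (ch n (P ++ [u])), ← mul_assoc (ch n (P ++ [u])), ch_comm P u b u,
        ch_comm P u b v]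
      rw [← mul_assoc]
      congr 1
      simp only [sub_mul, smul_sub, smul_mul_assoc, smul_smul, ← pow_add, mul_assoc]
      simp [← two_mul]
    rw [key, mul_sub, sub_mul, mul_smul_comm, smul_mul_assoc, map_sub, map_smul, h1, h2, smul_smul,
      ← sub_smul]
    congr 1
    have hs : (-1 : ℚ) ^ P.length * (-1 : ℚ) ^ P.length = 1 := by
      rw [← pow_add, ← two_mul]; simp
    simp only [List.length_append, List.length_singleton, pow_succ]
    push_cast
    linear_combination (1/2 : ℚ) * hs

lemma vanish (L0 : List (Fin (n+1))) (R π : OS n) (h3 : 3 ≤ L0.length)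
    (H : ∀ L : List (Fin (n+1)), L.Perm L0 → A n (ch n L * R) = π) : π = 0 := by
  match L0, h3, H with
  | a :: b :: v :: P, _, H =>
  have p1 : (a :: b :: (P ++ [v])).Perm (a :: b :: v :: P) :=
    ((List.perm_append_singleton v P).cons b).cons a
  have h1 := L_formula _ R π H P a b v [] p1
  have h2 := H (P ++ v :: [b, a]) (by
    refine List.Perm.trans ?_ p1
    have : P ++ v :: [b, a] = (P ++ [v]) ++ [b, a] := by simp
    rw [this]
    refine List.perm_append_comm.trans ?_
    exact List.Perm.swap _ _ _)
  have key : eOS n a b * (eOS n b v * ch n (P ++ [v])) * R = - (ch n (P ++ v :: [b, a]) * R) := by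
    rw [ch_append P v [b, a], ch_cons, ch_cons, ch_single, mul_one, ← neg_mul]
    congr 1
    rw [← mul_assoc (ch n (P ++ [v])), ch_comm, smul_mul_assoc, mul_assoc, ch_comm, mul_smul_comm,
      smul_smul, ← pow_add, ← two_mul]
    rw [← mul_assoc, ← mul_assoc, e_symm v b, e_symm b a, e_anti b v a b]
    simp
  rw [key, map_neg, h2] at h1
  have h4 : ((2 * P.length + 3 + (-1 : ℚ) ^ P.length) / 4 + 1) • π = 0 := by
    rw [add_smul, ← h1]; simp
  refine (smul_eq_zero.mp h4).resolve_left ?_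
  have : (-1 : ℚ) ≤ (-1 : ℚ) ^ P.length := by
    rcases neg_one_pow_eq_or ℚ P.length with h | h <;> rw [h]; norm_num
  have : (0 : ℚ) ≤ P.length := Nat.cast_nonneg _
  apply ne_of_gt
  linarith

lemma perm_Mon_fix (σ : Equiv.Perm (Fin (n+1))) (LL : List (List (Fin (n+1))))
    (h : ∀ x ∈ LL.flatten, σ x = x) : OSperm n σ (Mon n LL) = Mon n LL := by
  induction LL with
  | nil => simp
  | cons L LL ih =>
    rw [Mon_cons, map_mul, perm_ch, ih (fun x hx => h x (by simp only [List.flatten_cons, List.mem_append]; exact Or.inr hx))]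
    congr 2
    conv_rhs => rw [← List.map_id L]
    refine List.map_congr_left fun x hx => h x ?_
    simp only [List.flatten_cons, List.mem_append]; exact Or.inl hx

/-- a forest monomial with a large component avoiding the root is killed -/
lemma kill_three (L : List (Fin (n+1))) (LL : List (List (Fin (n+1)))) (h3 : 3 ≤ L.length)
    (hn : (L ++ LL.flatten).Nodup) (hr : Fin.last n ∉ L) : A n (ch n L * Mon n LL) = 0 := by
  refine vanish L (Mon n LL) _ h3 ?_
  intro L' hL'
  have hd := List.nodup_append.mp hn
  obtain ⟨σ, h1, h2⟩ := exists_perm hL'.symm hd.1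
  rw [← A_perm σ (h1 _ hr) (ch n L * _), map_mul (OSperm n σ), perm_ch, h2, perm_Mon_fix]
  intro x hx
  apply h1
  intro hxL
  exact hd.2.2 x hxL x hx rfl

lemma kill_two (a b c d : Fin (n+1)) (LL : List (List (Fin (n+1))))
    (hn : ([a, b, c, d] ++ LL.flatten).Nodup) (hr : Fin.last n ∉ [a, b, c, d]) :
    A n (eOS n a b * (eOS n c d * Mon n LL)) = 0 := by
  have hd := List.nodup_append.mp hn
  have hp : [a, b, c, d].Perm [c, d, a, b] := List.perm_append_comm (l₁ := [a,b]) (l₂ := [c,d])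
  obtain ⟨σ, h1, h2⟩ := exists_perm hp hd.1
  simp only [List.map_cons, List.map_nil, List.cons.injEq, and_true] at h2
  obtain ⟨ha, hb, hc, hd'⟩ := h2
  have h3 := A_perm σ (h1 _ hr) (eOS n a b * (eOS n c d * Mon n LL))
  rw [map_mul (OSperm n σ), map_mul (OSperm n σ), perm_e, perm_e, ha, hb, hc, hd', perm_Mon_fix, ← mul_assoc, e_anti,
    neg_mul, map_neg, mul_assoc] at h3
  · have h4 : (2 : ℚ) • A n (eOS n a b * (eOS n c d * Mon n LL)) = 0 := by
      rw [two_smul]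
      nth_rewrite 1 [← h3]
      simp
    exact (smul_eq_zero.mp h4).resolve_left (by norm_num)
  · intro x hx
    apply h1
    intro hxL
    exact hd.2.2 x hxL x hx rfl

/-- the standard labelling: root first -/
def xx (n : ℕ) (i : ℕ) : Fin (n+1) := if i = 0 then Fin.last n else Fin.ofNat (n+1) (i-1)

/-- height of a vertex -/
def ht (n : ℕ) (v : Fin (n+1)) : ℕ := if v = Fin.last n then 0 else v.val + 1

lemma ht_xx (i : ℕ) (h : i ≤ n) : ht n (xx n i) = i := by
  unfold ht xx
  by_cases h0 : i = 0
  · simp [h0]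
  · have h2 : (i - 1) % (n + 1) = i - 1 := Nat.mod_eq_of_lt (by omega)
    have : Fin.ofNat (n+1) (i-1) ≠ Fin.last n := by
      intro hh
      have := congrArg Fin.val hh
      simp [Fin.ofNat, h2] at this
      omega
    rw [if_neg h0, if_neg this]
    simp [Fin.ofNat, h2]
    omega

lemma ht_inj : Function.Injective (ht n) := by
  intro a b h
  unfold ht at h
  split_ifs at h with h1 h2 h2
  · rw [h1, h2]
  · exact Fin.ext (by omega)

lemma ht_last : ht n (Fin.last n) = 0 := by simp [ht]
lemma xx_zero : xx n 0 = Fin.last n := by simp [xx]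

/-- standard chain -/
def wL (n k : ℕ) : List (Fin (n+1)) := (List.range (k+1)).map (xx n)

/-- the generating family -/
def fam (n : ℕ) : Fin (n+1) ⊕ Fin (n-1) → OS n
  | .inl k => A n (ch n (wL n k))
  | .inr k => A n (ch n (wL n k) * eOS n (xx n (k+1)) (xx n (k+2)))

lemma nodup_xx (k : ℕ) (h : k ≤ n + 1) : ((List.range k).map (xx n)).Nodup := by
  refine List.Nodup.map_on ?_ List.nodup_range
  intro a ha b hb hab
  rw [List.mem_range] at ha hb
  rw [← ht_xx a (by omega : a ≤ n), ← ht_xx b (by omega : b ≤ n), hab]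

lemma wL_cons (k : ℕ) : ∃ l, wL n k = Fin.last n :: l ∧ l.length = k := by
  unfold wL
  rw [List.range_succ_eq_map, List.map_cons, xx_zero]
  exact ⟨_, rfl, by simp⟩

lemma w_mem (B : List (Fin (n+1))) (hB : (Fin.last n :: B).Nodup) :
    A n (ch n (Fin.last n :: B)) ∈ Submodule.span ℚ (Set.range (fam n)) := by
  have hk : B.length < n + 1 := by
    have := hB.length_le_card
    simp at this; omega
  refine Submodule.subset_span ⟨.inl ⟨B.length, hk⟩, ?_⟩
  obtain ⟨l, hl, hll⟩ := wL_cons (n := n) B.length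
  obtain ⟨σ, hσ⟩ := exists_perm' (wL n B.length) (Fin.last n :: B)
    (nodup_xx _ (by omega)) hB (by simp [wL])
  have h0 : σ (Fin.last n) = Fin.last n := by
    rw [hl] at hσ
    simp at hσ
    exact hσ.1
  simp only [fam]
  rw [← A_perm σ h0, perm_ch, hσ]

lemma u_mem (B : List (Fin (n+1))) (a b : Fin (n+1)) (hB : (Fin.last n :: B ++ [a, b]).Nodup) :
    A n (ch n (Fin.last n :: B) * eOS n a b) ∈ Submodule.span ℚ (Set.range (fam n)) := by
  have hk : B.length < n - 1 := by
    have := hB.length_le_card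
    simp at this; omega
  refine Submodule.subset_span ⟨.inr ⟨B.length, hk⟩, ?_⟩
  obtain ⟨l, hl, hll⟩ := wL_cons (n := n) B.length
  obtain ⟨σ, hσ⟩ := exists_perm' ((List.range (B.length + 3)).map (xx n)) (Fin.last n :: B ++ [a, b])
    (nodup_xx _ (by omega)) hB (by simp)
  have e1 : (List.range (B.length + 3)).map (xx n)
      = wL n B.length ++ [xx n (B.length + 1), xx n (B.length + 2)] := by
    simp [wL, List.range_succ]
  rw [e1, List.map_append] at hσ
  obtain ⟨hσ1, hσ2⟩ := List.append_inj hσ (by simp [wL])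
  simp only [List.map_cons, List.map_nil, List.cons.injEq, and_true] at hσ2
  have h0 : σ (Fin.last n) = Fin.last n := by
    rw [hl] at hσ1
    simp at hσ1
    exact hσ1.1
  simp only [fam]
  rw [← A_perm σ h0, map_mul, perm_ch, hσ1, perm_e, hσ2.1, hσ2.2]

lemma Mon_filter (LL : List (List (Fin (n+1)))) (h : ∀ L ∈ LL, L.length ≤ 2) :
    Mon n (LL.filter (fun L => L.length = 2)) = Mon n LL := by
  induction LL with
  | nil => simp
  | cons L LL ih =>
    have ih := ih (fun L' hL' => h L' (List.mem_cons_of_mem _ hL'))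
    by_cases h2 : L.length = 2
    · rw [List.filter_cons_of_pos (by simpa using h2), Mon_cons, Mon_cons, ih]
    · rw [List.filter_cons_of_neg (by simpa using h2), Mon_cons, ih]
      have := h L (by simp)
      match L, this, h2 with
      | [], _, _ => simp
      | [a], _, _ => simp
      | a :: b :: l, h4, h5 => simp at h4 h5; exact absurd h4 h5

lemma A_root_mem (B : List (Fin (n+1))) (LL : List (List (Fin (n+1))))
    (hn : (Fin.last n :: B ++ LL.flatten).Nodup) :
    A n (ch n (Fin.last n :: B) * Mon n LL) ∈ Submodule.span ℚ (Set.range (fam n)) := by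
  by_cases hL : ∃ L ∈ LL, 3 ≤ L.length
  · obtain ⟨L, hL, h3⟩ := hL
    have p1 : ((Fin.last n :: B) :: LL).Perm (L :: (Fin.last n :: B) :: LL.erase L) :=
      ((List.perm_cons_erase hL).cons _).trans (List.Perm.swap _ _ _)
    obtain ⟨c, hc⟩ := Mon_perm p1
    rw [← Mon_cons, hc, Mon_cons, map_smul, kill_three L _ h3]
    · simp
    · have := p1.flatten.nodup_iff.mp (by simpa using hn)
      simpa using this
    · intro hr
      have := p1.flatten.nodup_iff.mp (by simpa using hn)
      rw [List.flatten_cons] at this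
      exact (List.nodup_append.mp this).2.2 _ hr _ (by simp) rfl
  · push Not at hL
    have hL2 : ∀ L ∈ LL, L.length ≤ 2 := fun L h => by have := hL L h; omega
    rw [← Mon_filter LL hL2]
    have hsub : (LL.filter (fun L => L.length = 2)).flatten.Sublist LL.flatten :=
      List.Sublist.flatten List.filter_sublist
    have hn2 := hn.sublist (hsub.append_left (Fin.last n :: B))
    have hall : ∀ L ∈ LL.filter (fun L => L.length = 2), L.length = 2 := by
      intro L h; simpa using (List.mem_filter.mp h).2
    generalize LL.filter (fun L => L.length = 2) = K at hn2 hall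
    match K, hn2, hall with
    | [], hn2, _ => simpa using w_mem B (by simpa using hn2)
    | [L], hn2, hall =>
      obtain ⟨a, b, rfl⟩ := List.length_eq_two.mp (hall L (by simp))
      simpa using u_mem B a b (by simpa using hn2)
    | L :: L' :: K, hn2, hall =>
      obtain ⟨a, b, rfl⟩ := List.length_eq_two.mp (hall L (by simp))
      obtain ⟨c, d, rfl⟩ := List.length_eq_two.mp (hall L' (by simp))
      have p1 : ((Fin.last n :: B) :: [a, b] :: [c, d] :: K).Perm
          ([a, b] :: [c, d] :: (Fin.last n :: B) :: K) :=
        (List.Perm.swap _ _ _).trans ((List.Perm.swap _ _ _).cons _)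
      obtain ⟨c', hc⟩ := Mon_perm p1
      have h4 := p1.flatten.nodup_iff.mp (by simpa using hn2)
      have := kill_two a b c d ((Fin.last n :: B) :: K) (by simpa using h4) (by
        intro hr
        have h5 : ([a, b, c, d] ++ ((Fin.last n :: B) :: K).flatten).Nodup := by simpa using h4
        exact (List.nodup_append.mp h5).2.2 _ hr _ (by simp) rfl)
      rw [← Mon_cons, hc, map_smul, Mon_cons, Mon_cons]
      simp only [ch_cons, ch_single, mul_one] at this ⊢
      rw [this]
      simp

lemma A_mem_span (x : OS n) : A n x ∈ Submodule.span ℚ (Set.range (fam n)) := by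
  have hx := mem_FS x
  unfold FS at hx
  induction hx using Submodule.span_induction with
  | zero => simp
  | add a b _ _ ha hb => rw [map_add]; exact Submodule.add_mem _ ha hb
  | smul c a _ ha => rw [map_smul]; exact Submodule.smul_mem _ _ ha
  | mem y hy =>
  obtain ⟨LL, hLL, rfl⟩ := hy
  obtain ⟨L, hL, hr⟩ := List.mem_flatten.mp (hLL.mem_iff.mpr (List.mem_finRange (Fin.last n)))
  have p1 := List.perm_cons_erase hL
  obtain ⟨c, hc⟩ := Mon_perm p1
  rw [hc, map_smul, Mon_cons]
  refine Submodule.smul_mem _ _ ?_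
  have q1 : (L :: LL.erase L).flatten.Nodup :=
    (p1.flatten.symm.trans hLL).nodup_iff.mpr (List.nodup_finRange _)
  have hz := reroot _ L hr
  unfold RS at hz
  generalize ch n L = z at hz
  induction hz using Submodule.span_induction with
  | zero => simp
  | add a b _ _ ha hb => rw [add_mul, map_add]; exact Submodule.add_mem _ ha hb
  | smul c a _ ha => rw [smul_mul_assoc, map_smul]; exact Submodule.smul_mem _ _ ha
  | mem y hy =>
  obtain ⟨B, hB, rfl⟩ := hy
  apply A_root_mem
  rw [List.flatten_cons] at q1
  exact (hB.append_right _).nodup_iff.mpr q1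

lemma inv_eq_span : Subalgebra.toSubmodule (OSinv n) = Submodule.span ℚ (Set.range (fam n)) := by
  apply le_antisymm
  · intro x hx
    have h1 := A_inv x hx
    have h2 : x = ((G n).card : ℚ)⁻¹ • A n x := by
      rw [h1, smul_smul, inv_mul_cancel₀ G_card_ne, one_smul]
    rw [h2]
    exact Submodule.smul_mem _ _ (A_mem_span x)
  · rw [Submodule.span_le]
    rintro _ ⟨k | k, rfl⟩
    · exact A_mem _
    · exact A_mem _

end OSP

namespace OSP
variable {n : ℕ}

/-- target exterior algebra -/
abbrev EE := ExteriorAlgebra ℚ (ℕ → ℚ)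

/-- generators of the target -/
def ff (k : ℕ) : EE := ExteriorAlgebra.ι ℚ (Pi.single k 1)

/-- maximal height of a pair -/
def hs (n : ℕ) (s : Sym2 (Fin (n+1))) : ℕ :=
  Sym2.lift ⟨fun i j => max (ht n i) (ht n j), fun i j => max_comm _ _⟩ s

/-- lift to the ambient algebra -/
def PhiAmb (n : ℕ) : OSamb n →ₐ[ℚ] EE :=
  ExteriorAlgebra.lift ℚ
    ⟨(ExteriorAlgebra.ι ℚ).comp
      (Finsupp.linearCombination ℚ (fun s : OSidx n => (Pi.single (hs n s.1) 1 : ℕ → ℚ))),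
      fun m => by simp only [LinearMap.comp_apply]; exact ExteriorAlgebra.ι_sq_zero _⟩

lemma PhiAmb_e (i j : Fin (n+1)) (h : i ≠ j) :
    PhiAmb n (eAmb n i j h) = ff (max (ht n i) (ht n j)) := by
  simp [PhiAmb, eAmb, ff, hs]

lemma ff_sq (a : ℕ) : ff a * ff a = 0 := ExteriorAlgebra.ι_sq_zero _
lemma ff_anti (a b : ℕ) : ff a * ff b = - (ff b * ff a) :=
  eq_neg_of_add_eq_zero_left (ExteriorAlgebra.ι_add_mul_swap _ _)

lemma ff_rel (a b c : ℕ) : ff (max a c) * ff (max b c) - ff (max a b) * ff (max b c)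
    + ff (max a b) * ff (max a c) = 0 := by
  have h1 := ff_sq
  have h2 := ff_anti
  rcases le_total a b with hab | hab <;> rcases le_total b c with hbc | hbc <;>
    rcases le_total a c with hac | hac <;>
    simp only [max_eq_left, max_eq_right, hab, hbc, hac, h1]
  · simp
  · have : a = c := by omega
    subst this
    have : a = b := by omega
    subst this
    simp [h1]
  · rw [h2 b c]; simp
  · rw [h2 b a]; simp
  · simp
  · rw [h2 a c]; simp
  · have : a = c := by omega
    subst this
    have : a = b := by omega
    subst this
    simp [h1]
  · simp

/-- the detecting homomorphism -/
def Phi (n : ℕ) : OS n →ₐ[ℚ] EE :=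
  RingQuot.liftAlgHom ℚ ⟨PhiAmb n, by
    intro x y h
    cases h with
    | rel i j k hij hjk hik =>
      simp only [map_sub, map_add, map_mul, map_zero, PhiAmb_e]
      exact ff_rel _ _ _⟩

lemma Phi_e (i j : Fin (n+1)) (h : i ≠ j) :
    Phi n (eOS n i j) = ff (max (ht n i) (ht n j)) := by
  rw [eOS, dif_neg h, Phi, RingQuot.liftAlgHom_mkAlgHom_apply, PhiAmb_e]

/-- monomials in the target -/
def pf (K : List ℕ) : EE := (K.map ff).prod

/-- consecutive maxima -/
def gaps : List ℕ → List ℕ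
  | [] => []
  | [_] => []
  | a :: b :: l => max a b :: gaps (b :: l)

lemma Phi_ch (L : List (Fin (n+1))) (h : L.Nodup) :
    Phi n (ch n L) = pf (gaps (L.map (ht n))) := by
  induction L with
  | nil => simp [pf, gaps]
  | cons a L ih =>
    cases L with
    | nil => simp [pf, gaps]
    | cons b L =>
      have ih := ih (List.nodup_cons.mp h).2
      have hab : a ≠ b := by
        rintro rfl
        exact (List.nodup_cons.mp h).1 (by simp)
      rw [ch_cons, map_mul, ih, Phi_e a b hab]
      simp [pf, gaps]

lemma gaps_sorted (t : List ℕ) : ∀ a b : ℕ, a < b → (b :: t).Nodup → (gaps (a :: b :: t)).Nodup →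
    gaps (a :: b :: t) = b :: t ∧ (b :: t).Pairwise (· < ·) := by
  induction t with
  | nil => intro a b hab _ _; simp [gaps, hab.le]
  | cons c t ih =>
    intro a b hab hn hg
    have hbc : b < c := by
      by_contra hcon
      have hne : b ≠ c := by
        rintro rfl
        exact (List.nodup_cons.mp hn).1 (by simp)
      have : c < b := by omega
      simp [gaps, hab.le, this.le] at hg
    have hg' : (gaps (b :: c :: t)).Nodup := by
      rw [gaps] at hg
      exact (List.nodup_cons.mp hg).2
    obtain ⟨h1, h2⟩ := ih b c hbc (List.nodup_cons.mp hn).2 hg'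
    refine ⟨by rw [gaps, h1, max_eq_right hab.le], ?_⟩
    rw [List.pairwise_cons]
    refine ⟨?_, h2⟩
    intro x hx
    rcases List.mem_cons.mp hx with rfl | hx
    · exact hbc
    · exact hbc.trans ((List.pairwise_cons.mp h2).1 x hx)

lemma gaps_zero (t : List ℕ) (h : (0 :: t).Nodup) (hg : (gaps (0 :: t)).Nodup) :
    gaps (0 :: t) = t ∧ t.Pairwise (· < ·) := by
  cases t with
  | nil => simp [gaps]
  | cons b t =>
    refine gaps_sorted t 0 b ?_ (List.nodup_cons.mp h).2 hg
    rcases Nat.eq_zero_or_pos b with rfl | h'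
    · simp at h
    · exact h'

lemma gaps_length (a : ℕ) (t : List ℕ) : (gaps (a :: t)).length = t.length := by
  induction t generalizing a with
  | nil => simp [gaps]
  | cons b t ih => simp [gaps, ih]

lemma gaps_of_sorted (t : List ℕ) (a : ℕ) (h : (a :: t).Pairwise (· < ·)) : gaps (a :: t) = t := by
  induction t generalizing a with
  | nil => simp [gaps]
  | cons b t ih =>
    rw [List.pairwise_cons] at h
    rw [gaps, ih b h.2, max_eq_right (h.1 b (by simp)).le]

/-- coefficient functionals -/
def FF (s : ℕ → ℕ) (d : ℕ) : EE →ₗ[ℚ] ℚ :=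
  ExteriorAlgebra.liftAlternating fun i =>
    (if i = d then (1 : ℚ) else 0) • (Matrix.detRowAlternating (R := ℚ) (n := Fin i)).compLinearMap
      (LinearMap.funLeft ℚ ℚ (fun j : Fin i => s j))

lemma FF_pf (s : ℕ → ℕ) (d : ℕ) (K : List ℕ) : FF s d (pf K) =
    (if K.length = d then (1 : ℚ) else 0) *
      Matrix.det (Matrix.of fun i j : Fin K.length => (Pi.single (K.get i) 1 : ℕ → ℚ) (s j)) := by
  have : pf K = ExteriorAlgebra.ιMulti ℚ K.length (fun i => (Pi.single (K.get i) 1 : ℕ → ℚ)) := by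
    rw [ExteriorAlgebra.ιMulti_apply, pf]
    congr 1
    conv_lhs => rw [← List.ofFn_get K, List.map_ofFn]
    rfl
  rw [this, FF, ExteriorAlgebra.liftAlternating_apply_ιMulti]
  rfl

lemma FF_ne (s : ℕ → ℕ) (d : ℕ) (K : List ℕ) (h : FF s d (pf K) ≠ 0) :
    K.Perm ((List.range d).map s) := by
  rw [FF_pf] at h
  have hd : K.length = d := by
    by_contra hcon
    simp [hcon] at h
  have hdet := right_ne_zero_of_mul h
  have hnd : K.Nodup := by
    rw [List.nodup_iff_injective_get]
    intro i j hij
    by_contra hne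
    apply hdet
    refine Matrix.det_zero_of_row_eq hne ?_
    funext x
    simp only [Matrix.of_apply]
    rw [hij]
  have hsub : K ⊆ (List.range d).map s := by
    intro x hx
    obtain ⟨i, rfl⟩ := List.mem_iff_get.mp hx
    by_contra hcon
    apply hdet
    refine Matrix.det_eq_zero_of_row_eq_zero i ?_
    intro j
    simp only [Matrix.of_apply]
    refine Pi.single_eq_of_ne ?_ _
    intro hj
    exact hcon (List.mem_map.mpr ⟨j, List.mem_range.mpr (by omega), hj⟩)
  exact (hnd.subperm hsub).perm_of_length_le (by simp [hd])

lemma FF_one (s : ℕ → ℕ) (hs : Function.Injective s) (d : ℕ) :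
    FF s d (pf ((List.range d).map s)) = 1 := by
  rw [FF_pf]
  simp only [List.length_map, List.length_range, if_true, one_mul]
  have : (Matrix.of fun i j : Fin ((List.range d).map s).length =>
      (Pi.single (((List.range d).map s).get i) 1 : ℕ → ℚ) (s j)) = 1 := by
    ext i j
    simp only [Matrix.of_apply, Matrix.one_apply, Pi.single_apply, List.get_eq_getElem,
      List.getElem_map, List.getElem_range, hs.eq_iff]
    simp [Fin.ext_iff, eq_comm]
  rw [this, Matrix.det_one]

/-- first test index function -/
def s1 (j : ℕ) : ℕ := j + 1
/-- second test index function -/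
def s2 (d j : ℕ) : ℕ := if j + 1 < d then j + 1 else j + 2

lemma s1_mono : StrictMono s1 := fun a b h => by unfold s1; omega
lemma s2_mono (d : ℕ) : StrictMono (s2 d) := fun a b h => by unfold s2; split_ifs <;> omega

lemma sorted_map_range (s : ℕ → ℕ) (hs : StrictMono s) (d : ℕ) :
    ((List.range d).map s).Pairwise (· < ·) := by
  rw [List.pairwise_map]
  exact List.pairwise_lt_range.imp (fun h => hs h)

lemma eq_of_sorted (s : ℕ → ℕ) (hs : StrictMono s) (d : ℕ) (K : List ℕ)
    (hK : K.Perm ((List.range d).map s)) (h : K.Pairwise (· < ·)) : K = (List.range d).map s :=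
  hK.eq_of_pairwise (fun a b _ _ h1 h2 => by omega) h (sorted_map_range s hs d)

lemma mem_s1 (d x : ℕ) : x ∈ (List.range d).map s1 ↔ 1 ≤ x ∧ x ≤ d := by
  simp only [List.mem_map, List.mem_range, s1]
  constructor
  · rintro ⟨a, h, rfl⟩; omega
  · intro h; exact ⟨x - 1, by omega, by omega⟩

lemma mem_s2 (d x : ℕ) (hd : 1 ≤ d) :
    x ∈ (List.range d).map (s2 d) ↔ 1 ≤ x ∧ (x < d ∨ x = d + 1) := by
  simp only [List.mem_map, List.mem_range, s2]
  constructor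
  · rintro ⟨a, h, rfl⟩; split_ifs <;> omega
  · intro h
    rcases h.2 with h2 | h2
    · exact ⟨x - 1, by omega, by rw [if_pos (by omega)]; omega⟩
    · exact ⟨d - 1, by omega, by rw [if_neg (by omega)]; omega⟩

lemma w_term (t : List ℕ) (h : (0 :: t).Nodup) (d : ℕ) :
    0 ≤ FF s1 d (pf (gaps (0 :: t))) := by
  by_cases h0 : FF s1 d (pf (gaps (0 :: t))) = 0
  · rw [h0]
  have hp := FF_ne _ _ _ h0
  have hnd : (gaps (0 :: t)).Nodup :=
    hp.nodup_iff.mpr ((sorted_map_range s1 s1_mono d).imp (fun h => ne_of_lt h))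
  obtain ⟨h1, h2⟩ := gaps_zero t h hnd
  rw [eq_of_sorted s1 s1_mono d _ hp (by rw [h1]; exact h2), FF_one s1 s1_mono.injective]
  norm_num

lemma u_term1 (t : List ℕ) (a b : ℕ) (h : (0 :: t ++ [a, b]).Nodup) (d : ℕ) :
    FF s1 d (pf (gaps (0 :: t) ++ [max a b])) = 0 := by
  by_contra h0
  have hp := FF_ne _ _ _ h0
  have hnd : (gaps (0 :: t) ++ [max a b]).Nodup :=
    hp.nodup_iff.mpr ((sorted_map_range s1 s1_mono d).imp (fun h => ne_of_lt h))
  have hh : (0 :: t).Nodup := (List.nodup_append.mp h).1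
  obtain ⟨h1, h2⟩ := gaps_zero t hh (List.nodup_append.mp hnd).1
  have hmax := (mem_s1 d _).mp (hp.mem_iff.mp (by simp : max a b ∈ gaps (0 :: t) ++ [max a b]))
  simp at h
  have hmin : min a b ∈ gaps (0 :: t) ++ [max a b] := by
    rw [hp.mem_iff, mem_s1]; omega
  rw [h1, List.mem_append, List.mem_singleton] at hmin
  rcases hmin with hm | hm
  · rcases min_choice a b with h' | h' <;> rw [h'] at hm <;> grind
  · grind

lemma u_term2 (t : List ℕ) (a b : ℕ) (h : (0 :: t ++ [a, b]).Nodup) (d : ℕ) (hd : 1 ≤ d) :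
    0 ≤ FF (s2 d) d (pf (gaps (0 :: t) ++ [max a b])) := by
  by_cases h0 : FF (s2 d) d (pf (gaps (0 :: t) ++ [max a b])) = 0
  · rw [h0]
  have hp := FF_ne _ _ _ h0
  have hnd : (gaps (0 :: t) ++ [max a b]).Nodup :=
    hp.nodup_iff.mpr ((sorted_map_range (s2 d) (s2_mono d) d).imp (fun h => ne_of_lt h))
  have hh : (0 :: t).Nodup := (List.nodup_append.mp h).1
  obtain ⟨h1, h2⟩ := gaps_zero t hh (List.nodup_append.mp hnd).1
  have hmax := (mem_s2 d _ hd).mp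
    (hp.mem_iff.mp (by simp : max a b ∈ gaps (0 :: t) ++ [max a b]))
  simp at h
  have hmin : min a b ∉ gaps (0 :: t) ++ [max a b] := by
    intro hmin
    rw [h1, List.mem_append, List.mem_singleton] at hmin
    rcases hmin with hm | hm
    · rcases min_choice a b with h' | h' <;> rw [h'] at hm <;> grind
    · grind
  rw [hp.mem_iff, mem_s2 d _ hd] at hmin
  have hm : max a b = d + 1 := by omega
  have hsort : (gaps (0 :: t) ++ [max a b]).Pairwise (· < ·) := by
    rw [List.pairwise_append]
    refine ⟨by rw [h1]; exact h2, by simp, ?_⟩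
    intro x hx y hy
    rw [List.mem_singleton] at hy
    subst hy
    have hx' := (mem_s2 d x hd).mp (hp.mem_iff.mp (List.mem_append_left _ hx))
    have hne : x ≠ max a b := fun hh => (List.nodup_append.mp hnd).2.2 x hx _ (by simp) hh
    omega
  rw [eq_of_sorted (s2 d) (s2_mono d) d _ hp hsort, FF_one (s2 d) (s2_mono d).injective]
  norm_num

lemma wL_map (σ : Equiv.Perm (Fin (n+1))) (hσ : σ ∈ G n) (k : ℕ) :
    ∃ t : List ℕ, t.length = k ∧ ((wL n k).map σ).map (ht n) = 0 :: t := by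
  obtain ⟨l, hl, hll⟩ := wL_cons (n := n) k
  have h0 : σ (Fin.last n) = Fin.last n := by simpa [G] using hσ
  refine ⟨(l.map σ).map (ht n), by simpa using hll, ?_⟩
  rw [hl, List.map_cons, List.map_cons, h0, ht_last]

lemma Phi_w (σ : Equiv.Perm (Fin (n+1))) (hσ : σ ∈ G n) (k : ℕ) (hk : k ≤ n) :
    ∃ t : List ℕ, t.length = k ∧ (0 :: t).Nodup ∧
      ((wL n k).map σ).map (ht n) = 0 :: t ∧
      Phi n (OSperm n σ (ch n (wL n k))) = pf (gaps (0 :: t)) := by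
  obtain ⟨t, ht', h2⟩ := wL_map σ hσ k
  have hnd : ((wL n k).map σ).Nodup := (nodup_xx (k+1) (by omega)).map σ.injective
  refine ⟨t, ht', ?_, h2, ?_⟩
  · rw [← h2]; exact hnd.map ht_inj
  · rw [perm_ch, Phi_ch _ hnd, h2]

lemma Phi_u (σ : Equiv.Perm (Fin (n+1))) (hσ : σ ∈ G n) (k : ℕ) (hk : k + 2 ≤ n) :
    ∃ (t : List ℕ), t.length = k ∧
      (0 :: t ++ [ht n (σ (xx n (k+1))), ht n (σ (xx n (k+2)))]).Nodup ∧
      ((wL n k).map σ).map (ht n) = 0 :: t ∧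
      Phi n (OSperm n σ (ch n (wL n k) * eOS n (xx n (k+1)) (xx n (k+2))))
        = pf (gaps (0 :: t) ++ [max (ht n (σ (xx n (k+1)))) (ht n (σ (xx n (k+2))))]) := by
  obtain ⟨t, ht', hnd, h2, h3⟩ := Phi_w σ hσ k (by omega)
  have hne : xx n (k+1) ≠ xx n (k+2) := by
    intro hh
    have := congrArg (ht n) hh
    rw [ht_xx _ (by omega), ht_xx _ (by omega)] at this
    omega
  refine ⟨t, ht', ?_, h2, ?_⟩
  · have e1 : (List.range (k + 3)).map (xx n) = wL n k ++ [xx n (k + 1), xx n (k + 2)] := by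
      simp [wL, List.range_succ]
    have := ((nodup_xx (n := n) (k+3) (by omega)).map σ.injective).map ht_inj
    rw [e1, List.map_append, List.map_append, h2] at this
    simpa using this
  · rw [map_mul, map_mul, h3, perm_e, Phi_e _ _ (fun hh => hne (σ.injective hh))]
    simp [pf]

lemma one_mem_G : (1 : Equiv.Perm (Fin (n+1))) ∈ G n := by simp [G]

lemma wL_ht (k : ℕ) (hk : k ≤ n) :
    ((wL n k).map (1 : Equiv.Perm (Fin (n+1)))).map (ht n) = 0 :: (List.range k).map s1 := by
  have : ((wL n k).map (1 : Equiv.Perm (Fin (n+1)))).map (ht n) = List.range (k+1) := by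
    rw [wL, List.map_map, List.map_map]
    conv_rhs => rw [← List.map_id (List.range (k+1))]
    refine List.map_congr_left ?_
    intro i hi
    rw [List.mem_range] at hi
    simp [ht_xx i (by omega : i ≤ n)]
  rw [this, List.range_succ_eq_map]
  rfl

lemma gaps_std (k : ℕ) : gaps (0 :: (List.range k).map s1) = (List.range k).map s1 := by
  apply gaps_of_sorted
  rw [List.pairwise_cons]
  refine ⟨?_, sorted_map_range s1 s1_mono k⟩
  intro x hx
  rw [mem_s1] at hx
  omega

/-- the test functionals on `OS` -/
def psi (n : ℕ) (s : ℕ → ℕ) (d : ℕ) : OS n →ₗ[ℚ] ℚ := FF s d ∘ₗ (Phi n).toLinearMap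

lemma psi_A (s : ℕ → ℕ) (d : ℕ) (x : OS n) :
    psi n s d (A n x) = ∑ σ ∈ G n, FF s d (Phi n (OSperm n σ x)) := by
  rw [A_apply, map_sum]; rfl

lemma FF_length (s : ℕ → ℕ) (d : ℕ) (K : List ℕ) (h : K.length ≠ d) : FF s d (pf K) = 0 := by
  rw [FF_pf, if_neg h, zero_mul]

lemma psi_w_zero (s : ℕ → ℕ) (d k : ℕ) (hk : k ≤ n) (h : k ≠ d) :
    psi n s d (A n (ch n (wL n k))) = 0 := by
  rw [psi_A]
  refine Finset.sum_eq_zero fun σ hσ => ?_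
  obtain ⟨t, h1, h2, h3, h4⟩ := Phi_w σ hσ k hk
  rw [h4, FF_length]
  rw [gaps_length]; omega

lemma psi_u_zero (s : ℕ → ℕ) (d k : ℕ) (hk : k + 2 ≤ n) (h : k + 1 ≠ d) :
    psi n s d (A n (ch n (wL n k) * eOS n (xx n (k+1)) (xx n (k+2)))) = 0 := by
  rw [psi_A]
  refine Finset.sum_eq_zero fun σ hσ => ?_
  obtain ⟨t, h1, h2, h3, h4⟩ := Phi_u σ hσ k hk
  rw [h4, FF_length]
  rw [List.length_append, gaps_length, List.length_singleton]; omega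

lemma psi_u_zero' (d k : ℕ) (hk : k + 2 ≤ n) :
    psi n s1 d (A n (ch n (wL n k) * eOS n (xx n (k+1)) (xx n (k+2)))) = 0 := by
  rw [psi_A]
  refine Finset.sum_eq_zero fun σ hσ => ?_
  obtain ⟨t, h1, h2, h3, h4⟩ := Phi_u σ hσ k hk
  rw [h4, u_term1 _ _ _ h2]

lemma psi_w_pos (k : ℕ) (hk : k ≤ n) : psi n s1 k (A n (ch n (wL n k))) ≠ 0 := by
  rw [psi_A]
  apply ne_of_gt
  refine Finset.sum_pos' ?_ ⟨1, one_mem_G, ?_⟩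
  · intro σ hσ
    obtain ⟨t, h1, h2, h3, h4⟩ := Phi_w σ hσ k hk
    rw [h4]; exact w_term t h2 k
  · obtain ⟨t, h1, h2, h3, h4⟩ := Phi_w 1 one_mem_G k hk
    rw [wL_ht k hk] at h3
    rw [h4, ← h3, gaps_std, FF_one s1 s1_mono.injective]
    norm_num

lemma psi_u_pos (k : ℕ) (hk : k + 2 ≤ n) :
    psi n (s2 (k+1)) (k+1) (A n (ch n (wL n k) * eOS n (xx n (k+1)) (xx n (k+2)))) ≠ 0 := by
  rw [psi_A]
  apply ne_of_gt
  refine Finset.sum_pos' ?_ ⟨1, one_mem_G, ?_⟩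
  · intro σ hσ
    obtain ⟨t, h1, h2, h3, h4⟩ := Phi_u σ hσ k hk
    rw [h4]; exact u_term2 t _ _ h2 _ (by omega)
  · obtain ⟨t, h1, h2, h3, h4⟩ := Phi_u 1 one_mem_G k hk
    rw [wL_ht k (by omega)] at h3
    rw [h4, ← h3, gaps_std, Equiv.Perm.one_apply, Equiv.Perm.one_apply, ht_xx _ (by omega),
      ht_xx _ (by omega)]
    have : (List.range k).map s1 ++ [max (k+1) (k+2)] = (List.range (k+1)).map (s2 (k+1)) := by
      rw [List.range_succ, List.map_append]
      congr 1
      · refine List.map_congr_left ?_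
        intro i hi
        rw [List.mem_range] at hi
        simp [s1, s2, hi]
      · simp [s2]
    rw [this, FF_one _ (s2_mono _).injective]
    norm_num

lemma fam_indep : LinearIndependent ℚ (fam n) := by
  rw [Fintype.linearIndependent_iff]
  intro g hg
  rw [Fintype.sum_sum_type] at hg
  have hw : ∀ k, g (Sum.inl k) = 0 := by
    intro k
    have h := congrArg (psi n s1 k) hg
    rw [map_add, map_sum, map_sum, map_zero] at h
    rw [Finset.sum_eq_single k, Finset.sum_eq_zero, add_zero, map_smul, smul_eq_mul] at h
    · exact (mul_eq_zero.mp h).resolve_right (psi_w_pos k (by omega))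
    · intro j _
      rw [map_smul, fam, psi_u_zero' _ _ (by omega), smul_zero]
    · intro j _ hj
      rw [map_smul, fam, psi_w_zero _ _ _ (by omega) (fun hh => hj (Fin.ext hh)), smul_zero]
    · simp
  have hu : ∀ k, g (Sum.inr k) = 0 := by
    intro k
    have h := congrArg (psi n (s2 (k+1)) (k+1)) hg
    rw [map_add, map_sum, map_sum, map_zero] at h
    rw [Finset.sum_eq_zero, zero_add, Finset.sum_eq_single k, map_smul, smul_eq_mul] at h
    · exact (mul_eq_zero.mp h).resolve_right (psi_u_pos k (by omega))
    · intro j _ hj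
      have : (j : ℕ) ≠ k := fun hh => hj (Fin.ext hh)
      rw [map_smul, fam, psi_u_zero _ _ _ (by omega) (by omega), smul_zero]
    · simp
    · intro j _
      rw [hw, zero_smul, map_zero]
  rintro (k | k)
  · exact hw k
  · exact hu k

end OSP

/-- For every integer `n ≥ 2`, the `ℚ`-vector space `OS_n^{S_n}` has
dimension `2n`. -/
theorem finrank_OSinv (n : ℕ) (hn : 2 ≤ n) : Module.finrank ℚ (OSinv n) = 2 * n := by
  have h1 : Module.finrank ℚ (OSinv n)
      = Module.finrank ℚ (Subalgebra.toSubmodule (OSinv n)) := rfl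
  rw [h1, OSP.inv_eq_span, finrank_span_eq_card OSP.fam_indep]
  simp only [Fintype.card_sum, Fintype.card_fin]
  omega

end
end

section
/- For every integer n ≥ 2, the graded pieces of the invariant subalgebra satisfy: dim_ℚ (OS_n^{S_n})_0 = 1, dim_ℚ (OS_n^{S_n})_d = 2 for every d with 1 ≤ d ≤ n−1, dim_ℚ (OS_n^{S_n})_n = 1, and (OS_n^{S_n})_d = 0 for every d > n; equivalently, the Hilbert–Poincaré polynomial of OS_n^{S_n} equals (1 + t)(1 + t + t^2 + ⋯ + t^{n−1}). -/
noncomputable section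

/-! ### Basic properties of the generators -/

/-- The linear map from the span of the generators to `OS n`. -/
def OSJ (n : ℕ) : (OSidx n →₀ ℚ) →ₗ[ℚ] OS n :=
  (RingQuot.mkAlgHom ℚ (OSRel n)).toLinearMap.comp (ExteriorAlgebra.ι ℚ)

lemma OSJ_sq (n : ℕ) (v : OSidx n →₀ ℚ) : OSJ n v * OSJ n v = 0 := by
  simp only [OSJ, LinearMap.comp_apply, AlgHom.toLinearMap_apply]
  rw [← map_mul, ExteriorAlgebra.ι_sq_zero, map_zero]

lemma OSJ_anti (n : ℕ) (v w : OSidx n →₀ ℚ) : OSJ n v * OSJ n w = -(OSJ n w * OSJ n v) := by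
  have h := OSJ_sq n (v + w)
  rw [map_add, add_mul, mul_add, mul_add, OSJ_sq, OSJ_sq] at h
  rw [eq_neg_iff_add_eq_zero]
  simpa using h

lemma eOS_self (n : ℕ) (i : Fin (n+1)) : eOS n i i = 0 := by simp [eOS]

lemma eOS_of_ne (n : ℕ) (i j : Fin (n+1)) (h : i ≠ j) :
    eOS n i j = OSJ n (Finsupp.single ⟨s(i,j), by simp [Sym2.mk_isDiag_iff, h]⟩ 1) := by
  simp [eOS, h, OSJ, eAmb]

lemma eOS_eq_J (n : ℕ) (i j : Fin (n+1)) : ∃ v, eOS n i j = OSJ n v := by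
  by_cases h : i = j
  · exact ⟨0, by simp [eOS, h]⟩
  · exact ⟨_, eOS_of_ne n i j h⟩

lemma eOS_comm (n : ℕ) (i j : Fin (n+1)) : eOS n i j = eOS n j i := by
  by_cases h : i = j
  · subst h; rfl
  · rw [eOS_of_ne n i j h, eOS_of_ne n j i (Ne.symm h)]
    congr 3
    exact Sym2.eq_swap

lemma eOS_sq (n : ℕ) (i j : Fin (n+1)) : eOS n i j * eOS n i j = 0 := by
  obtain ⟨v, hv⟩ := eOS_eq_J n i j
  rw [hv, OSJ_sq]

lemma eOS_anti (n : ℕ) (i j k l : Fin (n+1)) :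
    eOS n i j * eOS n k l = -(eOS n k l * eOS n i j) := by
  obtain ⟨v, hv⟩ := eOS_eq_J n i j
  obtain ⟨w, hw⟩ := eOS_eq_J n k l
  rw [hv, hw, OSJ_anti]

lemma eOS_rel (n : ℕ) (i j k : Fin (n+1)) :
    eOS n i k * eOS n j k - eOS n i j * eOS n j k + eOS n i j * eOS n i k = 0 := by
  by_cases hij : i = j
  · subst hij; simp [eOS_self, eOS_sq]
  by_cases hjk : j = k
  · subst hjk; simp [eOS_self, eOS_sq]
  by_cases hik : i = k
  · subst hik; rw [eOS_comm n j i]; simp [eOS_self, eOS_sq]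
  have := RingQuot.mkAlgHom_rel ℚ (OSRel.rel i j k hij hjk hik)
  simpa [eOS, hij, hjk, hik] using this

lemma eOS_star (n : ℕ) (v a b : Fin (n+1)) :
    eOS n v a * eOS n v b = eOS n v a * eOS n a b - eOS n v b * eOS n a b := by
  have := eOS_rel n v a b
  rw [← sub_eq_zero, ← this]; abel

lemma OSperm_e (n : ℕ) (σ : Equiv.Perm (Fin (n+1))) (i j : Fin (n+1)) :
    OSperm n σ (eOS n i j) = eOS n (σ i) (σ j) := by
  by_cases h : i = j
  · subst h; simp [eOS_self]
  · have h' : σ i ≠ σ j := fun hh => h (σ.injective hh)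
    simp only [eOS, h, h', dite_false, OSperm]
    rw [RingQuot.liftAlgHom_mkAlgHom_apply, AlgHom.comp_apply, OSpermAmb_e]

lemma OS_hom_ext {n : ℕ} {A : Type*} [Ring A] [Algebra ℚ A] (f g : OS n →ₐ[ℚ] A)
    (h : ∀ i j, i ≠ j → f (eOS n i j) = g (eOS n i j)) : f = g := by
  apply RingQuot.ringQuot_ext'
  apply ExteriorAlgebra.hom_ext
  apply Finsupp.lhom_ext'
  rintro ⟨s, hs⟩
  induction s using Sym2.ind with
  | _ x y =>
    have hxy : x ≠ y := fun h => hs (by simp [h])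
    ext
    have := h x y hxy
    simpa [eOS, hxy, eAmb] using this

lemma OSperm_mul (n : ℕ) (σ τ : Equiv.Perm (Fin (n+1))) (x : OS n) :
    OSperm n σ (OSperm n τ x) = OSperm n (σ * τ) x := by
  have : (OSperm n σ).comp (OSperm n τ) = OSperm n (σ * τ) := by
    apply OS_hom_ext
    intro i j _
    simp [OSperm_e]
  rw [← this]; rfl

lemma OSperm_one (n : ℕ) (x : OS n) : OSperm n 1 x = x := by
  have : OSperm n 1 = AlgHom.id ℚ (OS n) := by
    apply OS_hom_ext
    intro i j _
    simp [OSperm_e]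
  rw [this]; rfl

/-- Construct algebra homomorphisms out of `OS n`. -/
lemma OS_lift {n : ℕ} {A : Type*} [Ring A] [Algebra ℚ A] (f : (OSidx n →₀ ℚ) →ₗ[ℚ] A)
    (hf : ∀ v, f v * f v = 0) (g : Fin (n+1) → Fin (n+1) → A)
    (hg : ∀ i j (h : i ≠ j),
      f (Finsupp.single ⟨s(i,j), by simp [Sym2.mk_isDiag_iff, h]⟩ 1) = g i j)
    (hrel : ∀ i j k, i ≠ j → j ≠ k → i ≠ k → g i k * g j k - g i j * g j k + g i j * g i k = 0) :
    ∃ F : OS n →ₐ[ℚ] A, ∀ i j, i ≠ j → F (eOS n i j) = g i j := by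
  have key : ∀ i j (h : i ≠ j), ExteriorAlgebra.lift ℚ ⟨f, hf⟩ (eAmb n i j h) = g i j := by
    intro i j h
    simp only [eAmb, ExteriorAlgebra.lift_ι_apply]
    exact hg i j h
  refine ⟨RingQuot.liftAlgHom ℚ ⟨ExteriorAlgebra.lift ℚ ⟨f, hf⟩, ?_⟩, ?_⟩
  · intro x y h
    cases h with
    | rel i j k hij hjk hik =>
      simp only [map_add, map_sub, map_mul, map_zero, key]
      exact hrel i j k hij hjk hik
  · intro i j h
    simp only [eOS, h, dite_false]
    rw [RingQuot.liftAlgHom_mkAlgHom_apply, key]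

/-! ### Spans of generators -/

/-- The span of the generators with both indices in `S`. -/
def OSE (n : ℕ) (S : Set (Fin (n+1))) : Submodule ℚ (OS n) :=
  Submodule.span ℚ {x | ∃ a ∈ S, ∃ b ∈ S, x = eOS n a b}

lemma eOS_mem (n : ℕ) {S : Set (Fin (n+1))} {a b : Fin (n+1)} (ha : a ∈ S) (hb : b ∈ S) :
    eOS n a b ∈ OSE n S := Submodule.subset_span ⟨a, ha, b, hb, rfl⟩

lemma OSE_mono (n : ℕ) {S T : Set (Fin (n+1))} (h : S ⊆ T) : OSE n S ≤ OSE n T := by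
  apply Submodule.span_mono
  rintro x ⟨a, ha, b, hb, rfl⟩
  exact ⟨a, h ha, b, h hb, rfl⟩

lemma OSE_pow_mono (n d : ℕ) {S T : Set (Fin (n+1))} (h : S ⊆ T) : OSE n S ^ d ≤ OSE n T ^ d :=
  pow_le_pow_left' (OSE_mono n h) d

lemma OSE_pow_perm (n d : ℕ) {S T : Set (Fin (n+1))} (σ : Equiv.Perm (Fin (n+1)))
    (h : ∀ a ∈ S, σ a ∈ T) {x : OS n} (hx : x ∈ OSE n S ^ d) : OSperm n σ x ∈ OSE n T ^ d := by
  have h1 : (OSE n S).map (OSperm n σ).toLinearMap ≤ OSE n T := by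
    rw [OSE, Submodule.map_span, Submodule.span_le]
    rintro _ ⟨_, ⟨a, ha, b, hb, rfl⟩, rfl⟩
    simp only [AlgHom.toLinearMap_apply, OSperm_e]
    exact eOS_mem n (h a ha) (h b hb)
  have h2 : (OSE n S ^ d).map (OSperm n σ).toLinearMap ≤ OSE n T ^ d := by
    rw [Submodule.map_pow]
    exact pow_le_pow_left' h1 d
  exact h2 ⟨x, hx, rfl⟩

lemma OSdeg_eq (n d : ℕ) : OSdeg n d = OSE n Set.univ ^ d := by
  rw [OSdeg, Submodule.map_pow]
  congr 1
  rw [← LinearMap.range_comp, OSE]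
  apply le_antisymm
  · rintro _ ⟨v, rfl⟩
    change OSJ n v ∈ _
    induction v using Finsupp.induction_linear with
    | zero => simp
    | add f g hf hg => rw [map_add]; exact add_mem hf hg
    | single s c =>
      obtain ⟨s, hs⟩ := s
      induction s using Sym2.ind with
      | _ x y =>
        have hxy : x ≠ y := fun h => hs (by simp [h])
        have : Finsupp.single (⟨s(x,y), hs⟩ : OSidx n) c
          = c • Finsupp.single (⟨s(x,y), hs⟩ : OSidx n) 1 := by simp
        rw [this, map_smul, ← eOS_of_ne n x y hxy]
        exact Submodule.smul_mem _ _ (Submodule.subset_span ⟨x, trivial, y, trivial, rfl⟩)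
  · rw [Submodule.span_le]
    rintro _ ⟨a, _, b, _, rfl⟩
    obtain ⟨v, hv⟩ := eOS_eq_J n a b
    rw [hv]
    exact ⟨v, rfl⟩

/-- Indices below `k`. -/
def OSlt (n k : ℕ) : Set (Fin (n+1)) := {a | a.val < k}

/-- Removing a vertex: every monomial can be rewritten with at most one edge at `v`. -/
lemma OSE_succ (n d : ℕ) (v : Fin (n+1)) :
    OSE n (OSlt n (v.val+1)) ^ (d+1) ≤ OSE n (OSlt n v.val) ^ (d+1) ⊔
      Submodule.span ℚ {x | ∃ w ∈ OSlt n v.val, ∃ y ∈ OSE n (OSlt n v.val) ^ d,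
        x = eOS n v w * y} := by
  set E := OSE n (OSlt n v.val) with hE
  set N : ℕ → Submodule ℚ (OS n) := fun d => Submodule.span ℚ {x | ∃ w ∈ OSlt n v.val,
    ∃ y ∈ E ^ d, x = eOS n v w * y} with hN
  have hEv : OSE n (OSlt n (v.val+1)) ≤ E ⊔
      Submodule.span ℚ {x | ∃ w ∈ OSlt n v.val, x = eOS n v w} := by
    rw [OSE, Submodule.span_le]
    rintro _ ⟨a, ha, b, hb, rfl⟩
    simp only [OSlt, Set.mem_ofPred_eq] at ha hb
    rcases Nat.lt_or_ge a.val v.val with ha' | ha'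
    · rcases Nat.lt_or_ge b.val v.val with hb' | hb'
      · exact Submodule.mem_sup_left (eOS_mem n ha' hb')
      · have : b = v := by ext; omega
        subst this
        exact Submodule.mem_sup_right (Submodule.subset_span ⟨a, ha', eOS_comm n _ _⟩)
    · have : a = v := by ext; omega
      subst this
      rcases Nat.lt_or_ge b.val a.val with hb' | hb'
      · exact Submodule.mem_sup_right (Submodule.subset_span ⟨b, hb', rfl⟩)
      · have : b = a := by ext; omega
        subst this
        simp [eOS_self]
  have hNm : ∀ d w, w ∈ OSlt n v.val → ∀ y ∈ E ^ d, eOS n v w * y ∈ N d :=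
    fun d w hw y hy => Submodule.subset_span ⟨w, hw, y, hy, rfl⟩
  have hEE : ∀ d x y, x ∈ E → y ∈ E ^ d → x * y ∈ E ^ (d+1) := by
    intro d x y hx hy
    rw [pow_succ']
    exact Submodule.mul_mem_mul hx hy
  have hanti : ∀ x ∈ E, ∀ w, x * eOS n v w = -(eOS n v w * x) := by
    intro x hx w
    induction hx using Submodule.span_induction with
    | mem x hx => obtain ⟨a, _, b, _, rfl⟩ := hx; exact eOS_anti n _ _ _ _
    | zero => simp
    | add x y _ _ hx hy => rw [add_mul, mul_add, hx, hy]; abel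
    | smul c x _ hx => rw [smul_mul_assoc, hx, mul_smul_comm, smul_neg]
  change _ ≤ E ^ (d+1) ⊔ N d
  induction d with
  | zero =>
    rw [pow_one, zero_add, pow_one]
    refine hEv.trans (sup_le_sup le_rfl ?_)
    rw [Submodule.span_le]
    rintro _ ⟨w, hw, rfl⟩
    have := hNm 0 w hw 1 (by rw [pow_zero]; exact Submodule.one_le.1 le_rfl)
    simpa using this
  | succ d ih =>
    rw [pow_succ', Submodule.mul_le]
    intro x hx y hy
    obtain ⟨x1, hx1, x2, hx2, rfl⟩ := Submodule.mem_sup.1 (hEv hx)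
    obtain ⟨y1, hy1, y2, hy2, rfl⟩ := Submodule.mem_sup.1 (ih hy)
    clear hx hy
    rw [add_mul, mul_add, mul_add]
    refine add_mem (add_mem ?_ ?_) (add_mem ?_ ?_)
    · exact Submodule.mem_sup_left (hEE _ _ _ hx1 hy1)
    · apply Submodule.mem_sup_right
      induction hy2 using Submodule.span_induction with
      | mem y hy =>
        obtain ⟨w, hw, y, hy, rfl⟩ := hy
        rw [← mul_assoc, hanti x1 hx1, neg_mul, mul_assoc]
        exact neg_mem (hNm _ w hw _ (hEE _ _ _ hx1 hy))
      | zero => simp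
      | add x y _ _ hx hy => rw [mul_add]; exact add_mem hx hy
      | smul c x _ hx => rw [mul_smul_comm]; exact Submodule.smul_mem _ _ hx
    · apply Submodule.mem_sup_right
      induction hx2 using Submodule.span_induction with
      | mem x hx =>
        obtain ⟨w, hw, rfl⟩ := hx
        exact hNm _ w hw _ hy1
      | zero => simp
      | add x y _ _ hx hy => rw [add_mul]; exact add_mem hx hy
      | smul c x _ hx => rw [smul_mul_assoc]; exact Submodule.smul_mem _ _ hx
    · apply Submodule.mem_sup_right
      induction hx2 using Submodule.span_induction with
      | mem x hx =>
        obtain ⟨w, hw, rfl⟩ := hx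
        induction hy2 using Submodule.span_induction with
        | mem y hy =>
          obtain ⟨u, hu, y, hy, rfl⟩ := hy
          rw [← mul_assoc, eOS_star, sub_mul, mul_assoc, mul_assoc]
          exact sub_mem (hNm _ w hw _ (hEE _ _ _ (eOS_mem n hw hu) hy))
            (hNm _ u hu _ (hEE _ _ _ (eOS_mem n hw hu) hy))
        | zero => simp
        | add x y _ _ hx hy => rw [mul_add]; exact add_mem hx hy
        | smul c x _ hx => rw [mul_smul_comm]; exact Submodule.smul_mem _ _ hx
      | zero => simp
      | add x y _ _ hx hy => rw [add_mul]; exact add_mem hx hy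
      | smul c x _ hx => rw [smul_mul_assoc]; exact Submodule.smul_mem _ _ hx

lemma OSE_top (n k : ℕ) (hk : k ≤ n) : ∀ d, k < d → OSE n (OSlt n (k+1)) ^ d = ⊥ := by
  induction k with
  | zero =>
    intro d hd
    have : OSE n (OSlt n (0+1)) = ⊥ := by
      rw [OSE, Submodule.span_eq_bot]
      rintro _ ⟨a, ha, b, hb, rfl⟩
      simp only [OSlt, Set.mem_ofPred_eq] at ha hb
      have : a = b := by ext; omega
      rw [this, eOS_self]
    rw [this, Submodule.bot_pow (by omega)]
  | succ k ih =>
    intro d hd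
    obtain ⟨d, rfl⟩ : ∃ d', d = d' + 1 := ⟨d-1, by omega⟩
    rw [eq_bot_iff]
    refine (OSE_succ n d ⟨k+1, by omega⟩).trans ?_
    simp only
    rw [ih (by omega) _ (by omega), ih (by omega) _ (by omega)]
    simp only [bot_sup_eq, Submodule.span_le]
    rintro _ ⟨w, _, y, hy, rfl⟩
    rw [Submodule.mem_bot] at hy
    simp [hy]

/-! ### Averaging operators -/

/-- Permutations fixing all indices `≥ k`. -/
def OSG (n k : ℕ) : Finset (Equiv.Perm (Fin (n+1))) :=
  Finset.univ.filter (fun σ => ∀ i : Fin (n+1), k ≤ i.val → σ i = i)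

lemma mem_OSG {n k : ℕ} {σ : Equiv.Perm (Fin (n+1))} :
    σ ∈ OSG n k ↔ ∀ i : Fin (n+1), k ≤ i.val → σ i = i := by simp [OSG]

lemma OSG_mul {n k : ℕ} {σ τ : Equiv.Perm (Fin (n+1))} (hσ : σ ∈ OSG n k) (hτ : τ ∈ OSG n k) :
    σ * τ ∈ OSG n k := by
  rw [mem_OSG] at *
  intro i hi
  rw [Equiv.Perm.mul_apply, hτ i hi, hσ i hi]

lemma OSG_inv {n k : ℕ} {σ : Equiv.Perm (Fin (n+1))} (hσ : σ ∈ OSG n k) : σ⁻¹ ∈ OSG n k := by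
  rw [mem_OSG] at *
  intro i hi
  rw [Equiv.Perm.inv_eq_iff_eq, hσ i hi]

lemma OSG_mono {n j k : ℕ} (h : j ≤ k) : OSG n j ⊆ OSG n k := by
  intro σ hσ
  rw [mem_OSG] at *
  exact fun i hi => hσ i (h.trans hi)

lemma OSG_one (n k : ℕ) : 1 ∈ OSG n k := by simp [mem_OSG]

lemma OSG_lt {n k : ℕ} {σ : Equiv.Perm (Fin (n+1))} (hσ : σ ∈ OSG n k) :
    ∀ a ∈ OSlt n k, σ a ∈ OSlt n k := by
  intro a ha
  simp only [OSlt, Set.mem_ofPred_eq] at *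
  by_contra h
  have := mem_OSG.1 hσ (σ a) (by omega)
  have := σ.injective this
  rw [this] at h
  exact h ha

lemma OSG_swap {n k : ℕ} {a b : Fin (n+1)} (ha : a.val < k) (hb : b.val < k) :
    Equiv.swap a b ∈ OSG n k := by
  rw [mem_OSG]
  intro i hi
  apply Equiv.swap_apply_of_ne_of_ne
  · rintro rfl; omega
  · rintro rfl; omega

/-- The (unnormalized) averaging operator over `OSG n k`. -/
def OSR (n k : ℕ) : OS n →ₗ[ℚ] OS n := ∑ σ ∈ OSG n k, (OSperm n σ).toLinearMap

lemma OSR_apply (n k : ℕ) (x : OS n) : OSR n k x = ∑ σ ∈ OSG n k, OSperm n σ x := by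
  simp [OSR]

/-- Invariance of a linear map under `OSG n k`. -/
def OSInvl (n k : ℕ) (L : OS n →ₗ[ℚ] OS n) : Prop :=
  ∀ σ ∈ OSG n k, ∀ x, L (OSperm n σ x) = L x

lemma OSInvl_mono {n j k : ℕ} (h : j ≤ k) {L : OS n →ₗ[ℚ] OS n} (hL : OSInvl n k L) :
    OSInvl n j L := fun σ hσ => hL σ (OSG_mono h hσ)

lemma OSR_inv (n k : ℕ) : OSInvl n k (OSR n k) := by
  intro τ hτ x
  rw [OSR_apply, OSR_apply]
  refine Finset.sum_bij (fun σ _ => σ * τ) (fun σ hσ => OSG_mul hσ hτ) ?_ ?_ ?_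
  · intro a _ b _ h; exact mul_right_cancel h
  · intro b hb; exact ⟨b * τ⁻¹, OSG_mul hb (OSG_inv hτ), by simp⟩
  · intro σ _; rw [OSperm_mul]

lemma OSperm_R (n k : ℕ) (τ : Equiv.Perm (Fin (n+1))) (hτ : τ ∈ OSG n k) (x : OS n) :
    OSperm n τ (OSR n k x) = OSR n k x := by
  rw [OSR_apply, map_sum]
  refine Finset.sum_bij (fun σ _ => τ * σ) (fun σ hσ => OSG_mul hτ hσ) ?_ ?_ ?_
  · intro a _ b _ h; exact mul_left_cancel h
  · intro b hb; exact ⟨τ⁻¹ * b, OSG_mul (OSG_inv hτ) hb, by simp⟩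
  · intro σ _; rw [OSperm_mul]

lemma OSR_of_fixed (n k : ℕ) (x : OS n) (h : ∀ σ ∈ OSG n k, OSperm n σ x = x) :
    OSR n k x = ((OSG n k).card : ℚ) • x := by
  rw [OSR_apply, Finset.sum_congr rfl h, Finset.sum_const, Nat.cast_smul_eq_nsmul]

lemma OSInvl_R {n k : ℕ} {L : OS n →ₗ[ℚ] OS n} (hL : OSInvl n k L) (x : OS n) :
    L (OSR n k x) = ((OSG n k).card : ℚ) • L x := by
  rw [OSR_apply, map_sum, Finset.sum_congr rfl (fun σ hσ => hL σ hσ x), Finset.sum_const,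
    Nat.cast_smul_eq_nsmul]

lemma OSG_card_ne (n k : ℕ) : ((OSG n k).card : ℚ) ≠ 0 := by
  rw [Nat.cast_ne_zero]
  exact Finset.card_ne_zero_of_mem (OSG_one n k)

lemma OSR_mem (n k d : ℕ) {x : OS n} (hx : x ∈ OSE n (OSlt n k) ^ d) :
    OSR n k x ∈ OSE n (OSlt n k) ^ d := by
  rw [OSR_apply]
  exact Submodule.sum_mem _ fun σ hσ => OSE_pow_perm n d σ (OSG_lt hσ) hx

lemma OSInvl_mulLeft {n k j : ℕ} (h : j ≤ k) {L : OS n →ₗ[ℚ] OS n} (hL : OSInvl n k L) (y : OS n)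
    (hy : ∀ σ ∈ OSG n j, OSperm n σ y = y) : OSInvl n j (L.comp (LinearMap.mulLeft ℚ y)) := by
  intro σ hσ x
  have := hL σ (OSG_mono h hσ) (y * x)
  rw [map_mul, hy σ hσ] at this
  simpa using this

lemma OSInvl_mulRight {n k j : ℕ} (h : j ≤ k) {L : OS n →ₗ[ℚ] OS n} (hL : OSInvl n k L) (y : OS n)
    (hy : ∀ σ ∈ OSG n j, OSperm n σ y = y) : OSInvl n j (L.comp (LinearMap.mulRight ℚ y)) := by
  intro σ hσ x
  have := hL σ (OSG_mono h hσ) (x * y)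
  rw [map_mul, hy σ hσ] at this
  simpa using this

lemma eOS_fixed {n j : ℕ} {a b : Fin (n+1)} (ha : j ≤ a.val) (hb : j ≤ b.val) :
    ∀ σ ∈ OSG n j, OSperm n σ (eOS n a b) = eOS n a b := by
  intro σ hσ
  rw [OSperm_e, mem_OSG.1 hσ a ha, mem_OSG.1 hσ b hb]

/-! ### The derivation -/

lemma OS_Phi (n : ℕ) : ∃ F : OS n →ₐ[ℚ] Matrix (Fin 2) (Fin 2) (OS n),
    ∀ i j, i ≠ j → F (eOS n i j) = !![eOS n i j, 1; 0, -eOS n i j] := by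
  let c : (OSidx n →₀ ℚ) →ₗ[ℚ] ℚ := Finsupp.linearCombination ℚ (fun _ => (1:ℚ))
  let f : (OSidx n →₀ ℚ) →ₗ[ℚ] Matrix (Fin 2) (Fin 2) (OS n) :=
    { toFun := fun v => !![OSJ n v, algebraMap ℚ (OS n) (c v); 0, -OSJ n v]
      map_add' := by
        intro v w
        ext i j
        fin_cases i <;> fin_cases j <;> simp [add_comm]
      map_smul' := by
        intro r v
        ext i j
        fin_cases i <;> fin_cases j <;> simp [Algebra.smul_def] }
  have hfv : ∀ v, f v = !![OSJ n v, algebraMap ℚ (OS n) (c v); 0, -OSJ n v] := fun v => rfl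
  clear_value f
  refine OS_lift f ?_ (fun i j => !![eOS n i j, 1; 0, -eOS n i j]) ?_ ?_
  · intro v
    rw [hfv, Matrix.mul_fin_two]
    have h1 := OSJ_sq n v
    have h2 := Algebra.commutes (c v) (OSJ n v)
    ext i j
    fin_cases i <;> fin_cases j <;> simp [h1, h2]
  · intro i j h
    rw [hfv, ← eOS_of_ne n i j h]
    simp [c]
  · intro i j k hij hjk hik
    simp only [Matrix.mul_fin_two]
    have := eOS_rel n i j k
    ext a b
    fin_cases a <;> fin_cases b <;> simp [this]
    abel

lemma OS_D (n : ℕ) : ∃ D : OS n →ₗ[ℚ] OS n,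
    (∀ σ x, D (OSperm n σ x) = OSperm n σ (D x)) ∧
    (∀ S d, ∀ x ∈ OSE n S ^ (d+1), D x ∈ OSE n S ^ d) ∧
    (∀ i j, i ≠ j → ∀ S d, ∀ x ∈ OSE n S ^ d,
      D (eOS n i j * x) = (-1 : ℚ) ^ d • x + eOS n i j * D x) := by
  obtain ⟨F, hF⟩ := OS_Phi n
  have hσ : ∀ σ x, F (OSperm n σ x) = (OSperm n σ).mapMatrix (F x) := by
    intro σ x
    have : F.comp (OSperm n σ) = ((OSperm n σ).mapMatrix).comp F := by
      apply OS_hom_ext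
      intro i j h
      have h' : σ i ≠ σ j := fun hh => h (σ.injective hh)
      simp only [AlgHom.comp_apply, OSperm_e, hF _ _ h, hF _ _ h']
      ext a b
      fin_cases a <;> fin_cases b <;> simp [OSperm_e]
    exact DFunLike.congr_fun this x
  have h01 : ∀ i j, i ≠ j → ∀ x, F (eOS n i j * x) 0 1 = eOS n i j * F x 0 1 + F x 1 1 := by
    intro i j h x
    rw [map_mul, hF i j h, Matrix.mul_apply]
    simp
  have h11 : ∀ i j, i ≠ j → ∀ x, F (eOS n i j * x) 1 1 = - (eOS n i j * F x 1 1) := by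
    intro i j h x
    rw [map_mul, hF i j h, Matrix.mul_apply]
    simp
  have hind : ∀ (S : Set (Fin (n+1))) d (P : OS n → Prop), P 0 → (∀ x y, P x → P y → P (x + y)) →
      (∀ (c : ℚ) x, P x → P (c • x)) → (∀ i ∈ S, ∀ j ∈ S, i ≠ j → ∀ x ∈ OSE n S ^ d,
        P (eOS n i j * x)) → ∀ x ∈ OSE n S ^ (d+1), P x := by
    intro S d P h0 ha hs he x hx
    rw [pow_succ'] at hx
    induction hx using Submodule.mul_induction_on' with
    | mem_mul_mem m hm y hy =>
      induction hm using Submodule.span_induction with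
      | mem x hx =>
        obtain ⟨a, ha, b, hb, rfl⟩ := hx
        by_cases hab : a = b
        · subst hab; simpa [eOS_self] using h0
        · exact he a ha b hb hab y hy
      | zero => simpa using h0
      | add x y _ _ hx hy => rw [add_mul]; exact ha _ _ hx hy
      | smul c x _ hx => rw [smul_mul_assoc]; exact hs _ _ hx
    | add x _ y _ hx hy => exact ha _ _ hx hy
  have h1 : ∀ S d, ∀ x ∈ OSE n S ^ d, F x 1 1 = (-1 : ℚ) ^ d • x := by
    intro S d
    induction d with
    | zero =>
      intro x hx
      rw [pow_zero, Submodule.mem_one] at hx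
      obtain ⟨c, rfl⟩ := hx
      rw [AlgHom.commutes, Matrix.algebraMap_matrix_apply]
      simp
    | succ d ih =>
      apply hind S d
      · simp
      · intro x y hx hy; rw [map_add, Matrix.add_apply, hx, hy, smul_add]
      · intro c x hx; rw [map_smul, Matrix.smul_apply, hx, smul_comm]
      · intro i _ j _ hij x hx
        rw [h11 i j hij, ih x hx, mul_smul_comm, pow_succ, mul_neg_one, neg_smul]
  let D : OS n →ₗ[ℚ] OS n :=
    { toFun := fun x => F x 0 1
      map_add' := fun x y => by simp
      map_smul' := fun c x => by simp }
  have hD : ∀ x, D x = F x 0 1 := fun x => rfl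
  refine ⟨D, ?_, ?_, ?_⟩ <;> simp only [hD]
  · intro σ x
    rw [hσ]; simp
  · intro S d
    induction d with
    | zero =>
      apply hind S 0
      · simp
      · intro x y hx hy; rw [map_add, Matrix.add_apply]; exact add_mem hx hy
      · intro c x hx; rw [map_smul, Matrix.smul_apply]; exact Submodule.smul_mem _ _ hx
      · intro i _ j _ hij x hx
        rw [h01 i j hij, h1 S 0 x hx]
        rw [pow_zero, Submodule.mem_one] at hx
        obtain ⟨c, rfl⟩ := hx
        rw [AlgHom.commutes, Matrix.algebraMap_matrix_apply]
        simp only [pow_zero, one_smul]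
        simp only [Fin.isValue, zero_ne_one, ↓reduceIte, mul_zero, zero_add]
        exact Submodule.mem_one.2 ⟨c, rfl⟩
    | succ d ih =>
      apply hind S (d+1)
      · simp
      · intro x y hx hy; rw [map_add, Matrix.add_apply]; exact add_mem hx hy
      · intro c x hx; rw [map_smul, Matrix.smul_apply]; exact Submodule.smul_mem _ _ hx
      · intro i hi j hj hij x hx
        rw [h01 i j hij, h1 S _ x hx]
        refine add_mem ?_ (Submodule.smul_mem _ _ hx)
        rw [pow_succ']
        exact Submodule.mul_mem_mul (eOS_mem n hi hj) (ih x hx)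
  · intro i j hij S d x hx
    rw [h01 i j hij, h1 S d x hx, add_comm]

/-- Vanishing of averages. -/
def OSvan (n k d : ℕ) : Prop := ∀ x ∈ OSE n (OSlt n k) ^ d, OSR n k x = 0

lemma OSvan_inv {n k d : ℕ} (h : OSvan n k d) {L : OS n →ₗ[ℚ] OS n} (hL : OSInvl n k L) :
    ∀ x ∈ OSE n (OSlt n k) ^ d, L x = 0 := by
  intro x hx
  have := OSInvl_R hL x
  rw [h x hx, map_zero] at this
  exact (smul_eq_zero.1 this.symm).resolve_left (OSG_card_ne n k)

lemma OSvan_top (n k d : ℕ) (hk : k ≤ n) (hd : k ≤ d + 1) (hk1 : 1 ≤ k)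
    (h : OSvan n (k+1) d) : OSvan n (k+1) (d+1) := by
  intro x hx
  obtain ⟨D, h1, h2, h3⟩ := OS_D n
  have hy := OSR_mem n (k+1) (d+1) hx
  have hD : D (OSR n (k+1) x) = 0 := by
    have := h (D x) (h2 _ _ x hx)
    rw [OSR_apply] at this ⊢
    rw [map_sum, ← this]
    exact Finset.sum_congr rfl fun σ _ => h1 σ x
  set y := OSR n (k+1) x with hyd
  have h01 : (⟨0, by omega⟩ : Fin (n+1)) ≠ ⟨1, by omega⟩ := by simp
  have h4 := h3 _ _ h01 _ _ y hy
  have h5 : eOS n ⟨0, by omega⟩ ⟨1, by omega⟩ * y ∈ OSE n (OSlt n (k+1)) ^ (d+2) := by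
    rw [pow_succ']
    exact Submodule.mul_mem_mul (eOS_mem n (by simp [OSlt]) (by simp [OSlt]; omega)) hy
  rw [OSE_top n k hk _ (by omega), Submodule.mem_bot] at h5
  rw [h5, hD, map_zero, mul_zero, add_zero] at h4
  exact (smul_eq_zero.1 h4.symm).resolve_left (by simp)

/-! ### Normal forms -/

/-- Natural number indices. -/
abbrev OSv (n k : ℕ) : Fin (n+1) := Fin.ofNat (n+1) k

lemma OSv_val {n k : ℕ} (h : k ≤ n) : (OSv n k).val = k := by
  simp [OSv, Nat.mod_eq_of_lt (Nat.lt_succ_of_le h)]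

/-- Path monomials. -/
def OSp (n : ℕ) : ℕ → ℕ → OS n
  | _, 0 => 1
  | 0, _ + 1 => 0
  | k + 1, d + 1 => eOS n (OSv n (k+1)) (OSv n k) * OSp n k d

/-- Path monomials times a disjoint edge. -/
def OSq (n : ℕ) : ℕ → ℕ → OS n
  | _, 0 => 0
  | k, 1 => eOS n (OSv n (k-1)) (OSv n (k-2))
  | 0, _ + 2 => 0
  | k + 1, d + 2 => eOS n (OSv n (k+1)) (OSv n k) * OSq n k (d+1)

lemma OSp_mem (n k d : ℕ) (hk : k ≤ n) :
    OSp n k d ∈ OSE n {a | k ≤ a.val + d ∧ a.val ≤ k} ^ d := by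
  induction k generalizing d with
  | zero =>
    cases d with
    | zero => rw [OSp, pow_zero]; exact Submodule.one_le.1 le_rfl
    | succ d => rw [OSp]; exact zero_mem _
  | succ k ih =>
    cases d with
    | zero => rw [OSp, pow_zero]; exact Submodule.one_le.1 le_rfl
    | succ d =>
      rw [OSp, pow_succ']
      refine Submodule.mul_mem_mul (eOS_mem n ?_ ?_) (OSE_pow_mono n d ?_ (ih d (by omega)))
      · simp only [Set.mem_ofPred_eq]; rw [OSv_val hk]; omega
      · simp only [Set.mem_ofPred_eq]; rw [OSv_val (by omega)]; omega
      · intro a ha; simp only [Set.mem_ofPred_eq] at *; omega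

lemma OSq_eq (n k d : ℕ) (hkd : d + 1 ≤ k) :
    OSq n k (d+1) = OSp n k d * eOS n (OSv n (k-d-1)) (OSv n (k-d-2)) := by
  induction d generalizing k with
  | zero => cases k <;> simp [OSq, OSp]
  | succ d ih =>
    obtain ⟨k, rfl⟩ : ∃ k', k = k' + 1 := ⟨k-1, by omega⟩
    rw [OSq, ih k (by omega), OSp, mul_assoc]
    congr 4 <;> congr 1 <;> omega

lemma OSq_zero (n k d : ℕ) (hkd : k ≤ d) : OSq n k d = 0 := by
  induction k generalizing d with
  | zero =>
    rcases d with _ | _ | d <;> simp [OSq, eOS_self]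
  | succ k ih =>
    rcases d with _ | _ | d
    · simp [OSq]
    · have : k = 0 := by omega
      subst this
      simp [OSq, eOS_self]
    · rw [OSq, ih _ (by omega), mul_zero]

lemma OSp_zero (n k d : ℕ) (hkd : k < d) : OSp n k d = 0 := by
  induction k generalizing d with
  | zero =>
    rcases d with _ | d
    · omega
    · simp [OSp]
  | succ k ih =>
    rcases d with _ | d
    · omega
    · rw [OSp, ih _ (by omega), mul_zero]

lemma OSC (n k : ℕ) (hk : k ≤ n) (hA : ∀ j ≤ k, ∀ d, 2 ≤ d → OSvan n j d) :
    ∀ (L : OS n →ₗ[ℚ] OS n), OSInvl n k L → ∀ d, ∀ x ∈ OSE n (OSlt n (k+1)) ^ d,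
      L x ∈ Submodule.span ℚ {L (OSp n k d), L (OSq n k d)} := by
  induction k with
  | zero =>
    intro L hL d x hx
    cases d with
    | zero =>
      rw [pow_zero, Submodule.mem_one] at hx
      obtain ⟨c, rfl⟩ := hx
      rw [Algebra.algebraMap_eq_smul_one, map_smul]
      exact Submodule.smul_mem _ _ (Submodule.subset_span (by simp [OSp]))
    | succ d =>
      rw [OSE_top n 0 hk _ (by omega), Submodule.mem_bot] at hx
      rw [hx, map_zero]; exact zero_mem _
  | succ k ih =>
    intro L hL d x hx
    cases d with
    | zero =>
      rw [pow_zero, Submodule.mem_one] at hx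
      obtain ⟨c, rfl⟩ := hx
      rw [Algebra.algebraMap_eq_smul_one, map_smul]
      exact Submodule.smul_mem _ _ (Submodule.subset_span (by simp [OSp]))
    | succ d =>
      have hv : (OSv n (k+1)).val = k+1 := OSv_val hk
      have hw : (OSv n k).val = k := OSv_val (by omega)
      have hx' := OSE_succ n d (OSv n (k+1)) (by rw [hv]; exact hx)
      rw [hv] at hx'
      obtain ⟨x1, hx1, x2, hx2, rfl⟩ := Submodule.mem_sup.1 hx'
      rw [map_add]
      refine add_mem ?_ ?_
      · cases d with
        | succ d => rw [OSvan_inv (hA (k+1) le_rfl (d+2) (by omega)) hL x1 hx1]; exact zero_mem _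
        | zero =>
          rw [zero_add, pow_one] at hx1
          clear hx hx' hx2
          induction hx1 using Submodule.span_induction with
          | zero => simp
          | add x y _ _ hx hy => rw [map_add]; exact add_mem hx hy
          | smul c x _ hx => rw [map_smul]; exact Submodule.smul_mem _ _ hx
          | mem x hx =>
            obtain ⟨a, ha, b, hb, rfl⟩ := hx
            by_cases hab : a = b
            · subst hab; simp [eOS_self]
            have hab' : a.val ≠ b.val := fun h => hab (Fin.ext h)
            simp only [OSlt, Set.mem_ofPred_eq] at ha hb
            have hu : (OSv n (k-1)).val = k-1 := OSv_val (by omega)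
            -- move `a` to `k`, then `b` to `k-1`
            set τ := Equiv.swap a (OSv n k) with hτ
            have hτm : τ ∈ OSG n (k+1) := OSG_swap ha (by omega)
            have hτa : τ a = OSv n k := by simp [hτ]
            have hτb : (τ b).val < k+1 := OSG_lt hτm b hb
            have hτb' : τ b ≠ OSv n k := by
              rw [← hτa]; exact fun h => hab (τ.injective h).symm
            set ρ := Equiv.swap (τ b) (OSv n (k-1)) with hρ
            have hρm : ρ ∈ OSG n (k+1) := OSG_swap hτb (by omega)
            have e1 := hL (ρ * τ) (OSG_mul hρm hτm) (eOS n a b)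
            have hne : OSv n k ≠ OSv n (k-1) := by
              intro h; have := congrArg Fin.val h; omega
            rw [OSperm_e, Equiv.Perm.mul_apply, Equiv.Perm.mul_apply, hτa] at e1
            rw [show ρ (τ b) = OSv n (k-1) by simp [hρ],
              show ρ (OSv n k) = OSv n k from
                Equiv.swap_apply_of_ne_of_ne hτb'.symm hne] at e1
            rw [← e1]
            apply Submodule.subset_span
            right
            simp [OSq]
      · clear hx hx'
        induction hx2 using Submodule.span_induction with
        | zero => simp
        | add x y _ _ hx hy => rw [map_add]; exact add_mem hx hy
        | smul c x _ hx => rw [map_smul]; exact Submodule.smul_mem _ _ hx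
        | mem x hx =>
          obtain ⟨w, hw', y, hy, rfl⟩ := hx
          set τ := Equiv.swap w (OSv n k) with hτ
          have hτm : τ ∈ OSG n (k+1) := OSG_swap hw' (by omega)
          have e1 := hL τ hτm (eOS n (OSv n (k+1)) w * y)
          rw [map_mul, OSperm_e, mem_OSG.1 hτm (OSv n (k+1)) hv.ge,
            show τ w = OSv n k by simp [hτ]] at e1
          rw [← e1]
          have hL' := OSInvl_mulLeft (Nat.le_succ k) hL (eOS n (OSv n (k+1)) (OSv n k))
            (eOS_fixed (by omega) (by omega))
          have := ih (by omega) (fun j hj => hA j (by omega)) _ hL' d (OSperm n τ y)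
            (OSE_pow_perm n d τ (OSG_lt hτm) hy)
          simp only [LinearMap.comp_apply, LinearMap.mulLeft_apply] at this
          refine Submodule.span_le.2 ?_ this
          rintro z (rfl | rfl)
          · exact Submodule.subset_span (by left; rw [OSp])
          · cases d with
            | zero => simp [OSq]
            | succ d => exact Submodule.subset_span (by right; rw [Set.mem_singleton_iff, OSq])

lemma eq_zero_of_eq_neg' {n : ℕ} {x : OS n} (h : x = -x) : x = 0 := by
  have h2 : (2 : ℚ) • x = 0 := by
    rw [two_smul]; nth_rewrite 2 [h]; simp
  exact (smul_eq_zero.1 h2).resolve_left (by norm_num)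

lemma double_swap {α : Type*} [DecidableEq α] {a b c d : α} (hab : a ≠ b) (hac : a ≠ c)
    (had : a ≠ d) (hbc : b ≠ c) (hbd : b ≠ d) (hcd : c ≠ d) :
    (Equiv.swap a c * Equiv.swap b d) a = c ∧ (Equiv.swap a c * Equiv.swap b d) b = d ∧
    (Equiv.swap a c * Equiv.swap b d) c = a ∧ (Equiv.swap a c * Equiv.swap b d) d = b ∧
    ∀ x, x ≠ a → x ≠ b → x ≠ c → x ≠ d → (Equiv.swap a c * Equiv.swap b d) x = x := by
  simp only [Equiv.Perm.mul_apply, Equiv.swap_apply_def]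
  refine ⟨?_, ?_, ?_, ?_, ?_⟩ <;> grind

lemma OSv_ne {n i j : ℕ} (hi : i ≤ n) (hj : j ≤ n) (h : i ≠ j) : OSv n i ≠ OSv n j := by
  intro hh
  have := congrArg Fin.val hh
  rw [OSv_val hi, OSv_val hj] at this
  exact h this

lemma OSA (n k : ℕ) (hk : k ≤ n + 1) : ∀ d, 2 ≤ d → OSvan n k d := by
  induction k using Nat.strong_induction_on with
  | _ k IH =>
  rcases k with _ | k
  · intro d hd x hx
    have : OSE n (OSlt n 0) = ⊥ := by
      rw [OSE, Submodule.span_eq_bot]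
      rintro _ ⟨a, ha, _⟩
      simp [OSlt] at ha
    rw [this, Submodule.bot_pow (by omega), Submodule.mem_bot] at hx
    rw [hx, map_zero]
  have hC := OSC n k (by omega) (fun j hj => IH j (by omega) (by omega)) (OSR n (k+1))
    (OSInvl_mono (Nat.le_succ k) (OSR_inv n (k+1)))
  have hR := OSR_inv n (k+1)
  have hV : ∀ j ≤ n, (OSv n j).val = j := fun j hj => OSv_val hj
  -- enough to kill the normal forms
  have hred : ∀ d, OSR n (k+1) (OSp n k d) = 0 → OSR n (k+1) (OSq n k d) = 0 →
      OSvan n (k+1) d := by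
    intro d h1 h2 x hx
    have := hC d x hx
    rw [h1, h2] at this
    simpa using this
  intro d hd
  induction d, hd using Nat.le_induction with
  | base =>
    apply hred
    · rcases k with _ | _ | k
      · simp [OSp]
      · simp [OSp]
      · have e1 := hR (Equiv.swap (OSv n (k+2)) (OSv n k))
          (OSG_swap (by rw [hV _ (by omega)]; omega) (by rw [hV _ (by omega)]; omega))
          (OSp n (k+2) 2)
        apply eq_zero_of_eq_neg'
        nth_rewrite 1 [← e1]
        rw [← map_neg]
        congr 1
        simp only [OSp, mul_one, map_mul, OSperm_e]
        have hn1 : OSv n (k+1) ≠ OSv n (k+2) := by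
          intro h; have := congrArg Fin.val h; rw [hV _ (by omega), hV _ (by omega)] at this; omega
        have hn2 : OSv n (k+1) ≠ OSv n k := by
          intro h; have := congrArg Fin.val h; rw [hV _ (by omega), hV _ (by omega)] at this; omega
        rw [Equiv.swap_apply_of_ne_of_ne hn1 hn2, Equiv.swap_apply_left, Equiv.swap_apply_right,
          eOS_anti, eOS_comm n (OSv n k), eOS_comm n (OSv n (k+1)) (OSv n (k+2))]
    · rcases Nat.lt_or_ge k 3 with h3 | h3
      · rw [OSq_zero n k 2 (by omega), map_zero]
      · obtain ⟨m, rfl⟩ : ∃ m, k = m + 3 := ⟨k - 3, by omega⟩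
        obtain ⟨s1, s2, s3, s4, -⟩ := double_swap
          (OSv_ne (n := n) (i := m+3) (j := m+2) (by omega) (by omega) (by omega))
          (OSv_ne (n := n) (i := m+3) (j := m+1) (by omega) (by omega) (by omega))
          (OSv_ne (n := n) (i := m+3) (j := m) (by omega) (by omega) (by omega))
          (OSv_ne (n := n) (i := m+2) (j := m+1) (by omega) (by omega) (by omega))
          (OSv_ne (n := n) (i := m+2) (j := m) (by omega) (by omega) (by omega))
          (OSv_ne (n := n) (i := m+1) (j := m) (by omega) (by omega) (by omega))
        have e1 := hR (Equiv.swap (OSv n (m+3)) (OSv n (m+1)) * Equiv.swap (OSv n (m+2)) (OSv n m))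
          (OSG_mul (OSG_swap (by rw [hV _ (by omega)]; omega) (by rw [hV _ (by omega)]; omega))
            (OSG_swap (by rw [hV _ (by omega)]; omega) (by rw [hV _ (by omega)]; omega)))
          (OSq n (m+3) 2)
        apply eq_zero_of_eq_neg'
        nth_rewrite 1 [← e1]
        rw [← map_neg]
        congr 1
        have hq : OSq n (m+3) 2
            = eOS n (OSv n (m+3)) (OSv n (m+2)) * eOS n (OSv n (m+1)) (OSv n m) := by
          simp [OSq]
        rw [hq, map_mul, OSperm_e, OSperm_e, s1, s2, s3, s4, eOS_anti]
  | succ d hd ih =>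
    rcases Nat.lt_or_ge (d+1) k with hdk | hdk
    · apply hred
      · have hp := OSp_mem n k (d+1) (by omega)
        have hm : Equiv.swap (OSv n k) (OSv n 0) ∈ OSG n (k+1) :=
          OSG_swap (by rw [hV _ (by omega)]; omega) (by rw [hV _ (by omega)]; omega)
        rw [← hR _ hm]
        apply OSvan_inv (IH k (by omega) (by omega) (d+1) (by omega))
          (OSInvl_mono (Nat.le_succ k) hR)
        refine OSE_pow_perm n (d+1) _ ?_ hp
        intro a ha
        simp only [Set.mem_ofPred_eq, OSlt] at ha ⊢
        by_cases hak : a = OSv n k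
        · rw [hak, Equiv.swap_apply_left, hV _ (by omega)]; omega
        · have h0 : a ≠ OSv n 0 := by
            intro h; have := congrArg Fin.val h; rw [hV _ (by omega)] at this; omega
          rw [Equiv.swap_apply_of_ne_of_ne hak h0]
          have : a.val ≠ k := fun h => hak (Fin.ext (by rw [hV _ (by omega)]; exact h))
          omega
      · have hp := OSp_mem n k d (by omega)
        rw [OSq_eq n k d (by omega)]
        obtain ⟨s1, s2, s3, s4, s5⟩ := double_swap
          (OSv_ne (n := n) (i := k) (j := k-1) (by omega) (by omega) (by omega))
          (OSv_ne (n := n) (i := k) (j := k-d-1) (by omega) (by omega) (by omega))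
          (OSv_ne (n := n) (i := k) (j := k-d-2) (by omega) (by omega) (by omega))
          (OSv_ne (n := n) (i := k-1) (j := k-d-1) (by omega) (by omega) (by omega))
          (OSv_ne (n := n) (i := k-1) (j := k-d-2) (by omega) (by omega) (by omega))
          (OSv_ne (n := n) (i := k-d-1) (j := k-d-2) (by omega) (by omega) (by omega))
        have hm : Equiv.swap (OSv n k) (OSv n (k-d-1)) * Equiv.swap (OSv n (k-1)) (OSv n (k-d-2))
            ∈ OSG n (k+1) :=
          OSG_mul (OSG_swap (by rw [hV _ (by omega)]; omega) (by rw [hV _ (by omega)]; omega))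
            (OSG_swap (by rw [hV _ (by omega)]; omega) (by rw [hV _ (by omega)]; omega))
        rw [← hR _ hm, map_mul, OSperm_e, s3, s4]
        have hL' := OSInvl_mulRight (j := k-1) (by omega) hR (eOS n (OSv n k) (OSv n (k-1)))
          (eOS_fixed (by rw [hV _ (by omega)]; omega) (by rw [hV _ (by omega)]))
        refine OSvan_inv (IH (k-1) (by omega) (by omega) d hd) hL' _ ?_
        refine OSE_pow_perm n d _ ?_ hp
        intro a ha
        simp only [Set.mem_ofPred_eq, OSlt] at ha ⊢
        have hne : ∀ j ≤ n, a.val ≠ j → a ≠ OSv n j := by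
          intro j hj h h'
          rw [h', hV j hj] at h
          exact h rfl
        by_cases h1 : a = OSv n k
        · rw [h1, s1, hV _ (by omega)]; omega
        by_cases h2 : a = OSv n (k-1)
        · rw [h2, s2, hV _ (by omega)]; omega
        rw [s5 a h1 h2 (hne _ (by omega) (by omega)) (hne _ (by omega) (by omega))]
        have h3 : a.val ≠ k := fun h => h1 (Fin.ext (by rw [hV _ (by omega)]; exact h))
        have h4 : a.val ≠ k-1 := fun h => h2 (Fin.ext (by rw [hV _ (by omega)]; exact h))
        omega
    · rcases Nat.eq_zero_or_pos k with rfl | hkp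
      · intro x hx
        rw [OSE_top n 0 (by omega) _ (by omega), Submodule.mem_bot] at hx
        rw [hx, map_zero]
      · exact OSvan_top n k d (by omega) hdk hkp ih

/-! ### The invariants are spanned by two averages -/

lemma OSlt_top (n : ℕ) : OSlt n (n+1) = Set.univ := by
  ext a; simp only [OSlt, Set.mem_ofPred_eq, a.isLt, Set.mem_univ]

lemma OSinvDeg_eq (n d : ℕ) :
    OSinvDeg n d = Submodule.span ℚ {OSR n n (OSp n n d), OSR n n (OSq n n d)} := by
  have hfix : ∀ x, (x ∈ OSinv n ↔ ∀ σ ∈ OSG n n, OSperm n σ x = x) := by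
    intro x
    change (∀ σ : Equiv.Perm (Fin (n+1)), σ (Fin.last n) = Fin.last n → OSperm n σ x = x) ↔ _
    refine forall_congr' fun σ => imp_congr_left ?_
    rw [mem_OSG]
    constructor
    · intro h i hi
      have : i = Fin.last n := by ext; simp; omega
      rw [this, h]
    · intro h; exact h _ (by simp)
  have hq : OSq n n d ∈ OSE n Set.univ ^ d := by
    cases d with
    | zero => rw [OSq]; exact zero_mem _
    | succ d =>
      rcases Nat.lt_or_ge n (d+1) with h | h
      · rw [OSq_zero n n _ (by omega)]; exact zero_mem _
      · rw [OSq_eq n n d h, pow_succ]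
        exact Submodule.mul_mem_mul (OSE_pow_mono n d (Set.subset_univ _) (OSp_mem n n d le_rfl))
          (eOS_mem n trivial trivial)
  have hp : OSp n n d ∈ OSE n Set.univ ^ d :=
    OSE_pow_mono n d (Set.subset_univ _) (OSp_mem n n d le_rfl)
  have hmem : ∀ x ∈ OSE n Set.univ ^ d, OSR n n x ∈ OSinvDeg n d := by
    intro x hx
    refine ⟨?_, ?_⟩
    · exact (hfix _).2 fun σ hσ => OSperm_R n n σ hσ x
    · rw [OSdeg_eq, OSR_apply]
      exact Submodule.sum_mem _ fun σ _ => OSE_pow_perm n d σ (T := Set.univ) (fun _ _ => trivial) hx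
  apply le_antisymm
  · rintro x ⟨hx1, hx2⟩
    have h1 := OSR_of_fixed n n x ((hfix x).1 hx1)
    rw [OSdeg_eq, ← OSlt_top] at hx2
    have h2 := OSC n n le_rfl (fun j hj => OSA n j (by omega)) _ (OSR_inv n n) d x hx2
    rw [h1] at h2
    exact (Submodule.smul_mem_iff _ (OSG_card_ne n n)).1 h2
  · rw [Submodule.span_le]
    rintro _ (rfl | rfl)
    · exact hmem _ hp
    · exact hmem _ hq

/-! ### Detecting functionals -/

lemma OS_functional (n d : ℕ) (w : ℕ → Fin d → ℚ) : ∃ f : OS n →ₗ[ℚ] ℚ,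
    ∀ a b : Fin d → Fin (n+1), (∀ i, a i ≠ b i) →
      f ((List.ofFn fun i => eOS n (a i) (b i)).prod) =
        Matrix.det (Matrix.of fun i => w (min (a i).val (b i).val)) := by
  let ms : Sym2 (Fin (n+1)) → ℕ := Sym2.lift ⟨fun a b => min a.val b.val, fun a b => min_comm _ _⟩
  let f0 : (OSidx n →₀ ℚ) →ₗ[ℚ] ExteriorAlgebra ℚ (Fin d → ℚ) :=
    (ExteriorAlgebra.ι ℚ).comp (Finsupp.linearCombination ℚ (fun s : OSidx n => w (ms s.1)))
  have hanti : ∀ x y : Fin d → ℚ, ExteriorAlgebra.ι ℚ x * ExteriorAlgebra.ι ℚ y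
      + ExteriorAlgebra.ι ℚ y * ExteriorAlgebra.ι ℚ x = 0 := by
    intro x y
    exact ExteriorAlgebra.ι_add_mul_swap x y
  obtain ⟨F, hF⟩ := OS_lift f0 (fun v => by simp [f0, ExteriorAlgebra.ι_sq_zero])
    (fun i j => ExteriorAlgebra.ι ℚ (w (min i.val j.val)))
    (fun i j h => by simp [f0, ms])
    (fun i j k hij hjk hik => by
      have h1 : i.val ≠ j.val := fun h => hij (Fin.ext h)
      have h2 : j.val ≠ k.val := fun h => hjk (Fin.ext h)
      have h3 : i.val ≠ k.val := fun h => hik (Fin.ext h)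
      rcases (by omega : (i.val < j.val ∧ i.val < k.val) ∨ (j.val < i.val ∧ j.val < k.val) ∨
        (k.val < i.val ∧ k.val < j.val)) with ⟨ha, hb⟩ | ⟨ha, hb⟩ | ⟨ha, hb⟩
      · rw [min_eq_left ha.le, min_eq_left hb.le, ExteriorAlgebra.ι_sq_zero]; simp
      · rw [min_eq_right ha.le, min_eq_left hb.le, ExteriorAlgebra.ι_sq_zero, sub_zero, hanti]
      · rw [min_eq_right ha.le, min_eq_right hb.le, ExteriorAlgebra.ι_sq_zero]; simp)
  let G : ExteriorAlgebra ℚ (Fin d → ℚ) →ₗ[ℚ] ℚ :=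
    ExteriorAlgebra.liftAlternating (Pi.single d Matrix.detRowAlternating)
  refine ⟨G.comp F.toLinearMap, fun a b hab => ?_⟩
  have h1 : F ((List.ofFn fun i => eOS n (a i) (b i)).prod) =
      ExteriorAlgebra.ιMulti ℚ d (fun i => w (min (a i).val (b i).val)) := by
    rw [map_list_prod, List.map_ofFn, ExteriorAlgebra.ιMulti_apply]
    congr 2
    funext i
    exact hF _ _ (hab i)
  rw [LinearMap.comp_apply, AlgHom.toLinearMap_apply, h1, ExteriorAlgebra.liftAlternating_apply_ιMulti,
    Pi.single_eq_same]
  rfl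

lemma OSp_ofFn (n k d : ℕ) (h : d ≤ k) : OSp n k d =
    (List.ofFn fun i : Fin d => eOS n (OSv n (k - i)) (OSv n (k - i - 1))).prod := by
  induction d generalizing k with
  | zero => simp [OSp]
  | succ d ih =>
    obtain ⟨k, rfl⟩ : ∃ k', k = k' + 1 := ⟨k-1, by omega⟩
    rw [OSp, List.ofFn_succ, List.prod_cons, ih k (by omega)]
    congr 3
    funext i
    simp only [Fin.val_succ]
    congr 2 <;> omega

/-- First endpoints for the second normal form. -/
def OSqa (n d : ℕ) (i : Fin d) : ℕ := if i.val + 1 < d then i.val else d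
lemma OSq_ofFn (n d : ℕ) (h : d + 1 ≤ n) (hd : 1 ≤ d) : OSq n n d =
    (List.ofFn fun i : Fin d => eOS n (OSv n (n - OSqa n d i)) (OSv n (n - (OSqa n d i + 1)))).prod := by
  obtain ⟨d, rfl⟩ : ∃ d', d = d' + 1 := ⟨d-1, by omega⟩
  rw [OSq_eq n n d (by omega), List.ofFn_succ', List.concat_eq_append, List.prod_append,
    List.prod_singleton, OSp_ofFn n n d (by omega)]
  congr 1
  · congr 2
    funext i
    have : OSqa n (d+1) i.castSucc = i := by simp [OSqa]
    rw [this]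
    rfl
  · have : OSqa n (d+1) (Fin.last d) = d+1 := by simp [OSqa]
    rw [this]
    rfl

lemma det_rows {d : ℕ} (w : ℕ → Fin d → ℚ) (m : Fin d → ℕ)
    (h : Matrix.det (Matrix.of fun i => w (m i)) ≠ 0) :
    (∀ i, ∃ c, w (m i) c ≠ 0) ∧ (∀ i j, i ≠ j → m i ≠ m j) := by
  constructor
  · intro i
    by_contra hc
    push Not at hc
    exact h (Matrix.det_eq_zero_of_row_eq_zero i hc)
  · intro i j hij hm
    exact h (Matrix.det_zero_of_row_eq hij (by ext c; simp [hm]))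

lemma path_desc (s : ℕ → ℕ) (r : ℕ) (h : ∀ i < r, s (i+1) < s i) :
    ∀ j i, i + j ≤ r → s (i+j) + j ≤ s i := by
  intro j
  induction j with
  | zero => intro i _; simp
  | succ j ih =>
    intro i hi
    have h1 := ih i (by omega)
    have h2 := h (i+j) (by omega)
    rw [show i + (j+1) = i+j+1 by ring]
    omega

lemma path_lt (s : ℕ → ℕ) (r : ℕ) (h0 : s 1 < s 0) (hne : ∀ i < r, s (i+1) ≠ s i)
    (hm : ∀ i, i + 1 < r → min (s i) (s (i+1)) ≠ min (s (i+1)) (s (i+2))) :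
    ∀ i < r, s (i+1) < s i := by
  intro i
  induction i with
  | zero => intro _; exact h0
  | succ i ih =>
    intro hi
    have h1 := ih (by omega)
    have h2 := hm i hi
    have h3 := hne (i+1) hi
    rw [show i + 1 + 1 = i + 2 from rfl] at *
    omega

/-- The weights detecting paths. -/
def OSw1 (n d : ℕ) (j : ℕ) (c : Fin d) : ℚ := if j + c.val + 1 = n then 1 else 0

/-- The weights detecting paths with an extra edge. -/
def OSw2 (n d : ℕ) (j : ℕ) (c : Fin d) : ℚ :=
  if (c.val + 1 < d ∧ j + c.val + 1 = n) ∨ (c.val + 1 = d ∧ j + d + 1 = n) then 1 else 0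

lemma OSw1_ne {n d j : ℕ} (h : ∃ c, OSw1 n d j c ≠ 0) : j < n ∧ n ≤ j + d := by
  obtain ⟨c, hc⟩ := h
  have := c.isLt
  simp only [OSw1, ne_eq, ite_eq_right_iff, one_ne_zero, imp_false, not_not] at hc
  omega

lemma OSw2_ne {n d j : ℕ} (h : ∃ c, OSw2 n d j c ≠ 0) :
    (j < n ∧ n < j + d) ∨ j + d + 1 = n := by
  obtain ⟨c, hc⟩ := h
  have := c.isLt
  simp only [OSw2, ne_eq, ite_eq_right_iff, one_ne_zero, imp_false, not_not] at hc
  omega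

lemma comb_p (n d : ℕ) (s : ℕ → ℕ) (h0 : s 0 = n) (hs : ∀ i, s i ≤ n)
    (hinj : ∀ i j, i ≤ n → j ≤ n → s i = s j → i = j) (hd : d ≤ n)
    (h : Matrix.det (Matrix.of fun i : Fin d => OSw1 n d (min (s i) (s (i+1)))) ≠ 0) :
    Matrix.det (Matrix.of fun i : Fin d => OSw1 n d (min (s i) (s (i+1)))) = 1 := by
  obtain ⟨h1, h2⟩ := det_rows (OSw1 n d) (fun i : Fin d => min (s i) (s (i+1))) h
  rcases Nat.eq_zero_or_pos d with rfl | hdp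
  · simp
  have hne : ∀ i < d, s (i+1) ≠ s i := by
    intro i hi hh
    have := hinj _ _ (by omega) (by omega) hh
    omega
  have hlt := path_lt s d (by have := hne 0 hdp; have := hs 1; simp only [zero_add] at *; omega) hne
    (fun i hi => by
      have := h2 ⟨i, by omega⟩ ⟨i+1, hi⟩ (by simp)
      simpa using this)
  have hdesc := path_desc s d hlt
  have hm : ∀ i : Fin d, min (s i) (s (i+1)) + i + 1 = n := by
    intro i
    have a1 := hlt i i.isLt
    have a2 := hdesc (i+1) 0 (by omega)
    have a3 := hdesc (d - 1 - i) (i+1) (by omega)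
    have a4 := OSw1_ne (h1 ⟨d-1, by omega⟩)
    simp only at a4
    rw [show d - 1 + 1 = d by omega] at a4
    rw [show i.val + 1 + (d - 1 - i) = d by omega] at a3
    rw [zero_add] at a2
    omega
  convert Matrix.det_one (n := Fin d) (R := ℚ)
  ext i c
  have := hm i
  simp only [Matrix.of_apply, OSw1, Matrix.one_apply]
  congr 1
  rw [Fin.ext_iff, eq_iff_iff]
  omega

lemma comb_q1 (n d : ℕ) (s : ℕ → ℕ) (h0 : s 0 = n) (hs : ∀ i, s i ≤ n)
    (hinj : ∀ i j, i ≤ n → j ≤ n → s i = s j → i = j) (hd : d + 1 ≤ n) (hd1 : 1 ≤ d) :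
    Matrix.det (Matrix.of fun i : Fin d =>
      OSw1 n d (min (s (OSqa n d i)) (s (OSqa n d i+1)))) = 0 := by
  by_contra h
  obtain ⟨h1, h2⟩ := det_rows (OSw1 n d) (fun i : Fin d => min (s (OSqa n d i)) (s (OSqa n d i+1))) h
  have hb : ∀ i ∈ Finset.Icc 1 (d+1), s i ∈ Finset.Ico (n-d) n := by
    intro i hi
    rw [Finset.mem_Icc] at hi
    rw [Finset.mem_Ico]
    have a1 : s i ≠ n := by
      intro hh
      have := hinj i 0 (by omega) (by omega) (by omega)
      omega
    have a2 := hs i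
    refine ⟨?_, by omega⟩
    rcases Nat.lt_or_ge i d with hid | hid
    · have a3 := OSw1_ne (h1 ⟨i-1, by omega⟩)
      have a4 : OSqa n d ⟨i-1, by omega⟩ = i - 1 := by
        simp only [OSqa]; rw [if_pos (by omega)]
      simp only [a4] at a3
      rw [show i - 1 + 1 = i by omega] at a3
      omega
    · have a3 := OSw1_ne (h1 ⟨d-1, by omega⟩)
      have a4 : OSqa n d ⟨d-1, by omega⟩ = d := by
        simp only [OSqa]; rw [if_neg (by omega)]
      simp only [a4] at a3
      rcases (by omega : i = d ∨ i = d+1) with rfl | rfl <;> omega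
  obtain ⟨x, hx, y, hy, hxy, he⟩ := Finset.exists_ne_map_eq_of_card_lt_of_maps_to
    (by simp only [Nat.card_Icc, Nat.card_Ico]; omega) hb
  rw [Finset.mem_Icc] at hx hy
  exact hxy (hinj x y (by omega) (by omega) he)

lemma comb_q2 (n d : ℕ) (s : ℕ → ℕ) (h0 : s 0 = n) (hs : ∀ i, s i ≤ n)
    (hinj : ∀ i j, i ≤ n → j ≤ n → s i = s j → i = j) (hd : d + 1 ≤ n) (hd1 : 1 ≤ d)
    (h : Matrix.det (Matrix.of fun i : Fin d =>
      OSw2 n d (min (s (OSqa n d i)) (s (OSqa n d i+1)))) ≠ 0) :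
    Matrix.det (Matrix.of fun i : Fin d =>
      OSw2 n d (min (s (OSqa n d i)) (s (OSqa n d i+1)))) = 1 := by
  obtain ⟨h1, h2⟩ := det_rows (OSw2 n d) (fun i : Fin d => min (s (OSqa n d i)) (s (OSqa n d i+1))) h
  have hqa : ∀ i (hi : i + 1 < d), OSqa n d ⟨i, by omega⟩ = i := by
    intro i hi; simp only [OSqa]; rw [if_pos hi]
  have hql : OSqa n d ⟨d-1, by omega⟩ = d := by
    simp only [OSqa]; rw [if_neg (by omega)]
  have hne : ∀ i < d - 1, s (i+1) ≠ s i := by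
    intro i hi hh
    have := hinj _ _ (by omega) (by omega) hh
    omega
  have hn : ∀ i, 1 ≤ i → i ≤ n → s i < n := by
    intro i hi1 hi2
    have a1 : s i ≠ n := by
      intro hh
      have := hinj i 0 (by omega) (by omega) (by omega)
      omega
    have := hs i
    omega
  have hlt := path_lt s (d-1) (by rw [h0]; exact hn 1 le_rfl (by omega)) hne
    (fun i hi => by
      have := h2 ⟨i, by omega⟩ ⟨i+1, by omega⟩ (by simp)
      simp only [hqa i (by omega), hqa (i+1) (by omega)] at this
      exact this)
  have hdesc := path_desc s (d-1) hlt
  have hpath : ∀ i, i + 1 < d → (n < s (i+1) + d) ∨ s (i+1) + d + 1 = n := by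
    intro i hi
    have a1 := OSw2_ne (h1 ⟨i, by omega⟩)
    simp only [hqa i hi] at a1
    have a2 := hlt i (by omega)
    omega
  have hlast : (n < min (s d) (s (d+1)) + d) ∨ min (s d) (s (d+1)) + d + 1 = n := by
    have a1 := OSw2_ne (h1 ⟨d-1, by omega⟩)
    simp only [hql] at a1
    omega
  have hlast' : min (s d) (s (d+1)) + d + 1 = n := by
    by_contra hc
    have hb : ∀ i ∈ Finset.Icc 1 (d+1), s i ∈ (Finset.Ico (n-1-d) n).erase (n-d) := by
      intro i hi
      rw [Finset.mem_Icc] at hi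
      rw [Finset.mem_erase, Finset.mem_Ico]
      have a1 := hn i hi.1 (by omega)
      rcases Nat.lt_or_ge i d with hid | hid
      · have a3 := hpath (i-1) (by omega)
        rw [show i - 1 + 1 = i by omega] at a3
        omega
      · rcases (by omega : i = d ∨ i = d+1) with rfl | rfl <;> omega
    obtain ⟨x, hx, y, hy, hxy, he⟩ := Finset.exists_ne_map_eq_of_card_lt_of_maps_to
      (by
        rw [Finset.card_erase_of_mem (by rw [Finset.mem_Ico]; omega)]
        simp only [Nat.card_Icc, Nat.card_Ico]; omega) hb
    rw [Finset.mem_Icc] at hx hy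
    exact hxy (hinj x y (by omega) (by omega) he)
  have hm : ∀ i, i + 1 < d → min (s i) (s (i+1)) + i + 1 = n := by
    intro i hi
    have a1 := hlt i (by omega)
    have a2 := hdesc (i+1) 0 (by omega)
    have a3 := hdesc (d - 2 - i) (i+1) (by omega)
    have a4 := hpath (d-2) (by omega)
    have a5 := h2 ⟨d-2, by omega⟩ ⟨d-1, by omega⟩ (by simp; omega)
    have a6 := hlt (d-2) (by omega)
    simp only [hqa (d-2) (by omega), hql] at a5
    rw [show d - 2 + 1 = d - 1 by omega] at a4 a5 a6
    rw [show i + 1 + (d - 2 - i) = d - 1 by omega] at a3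
    rw [zero_add] at a2
    omega
  convert Matrix.det_one (n := Fin d) (R := ℚ)
  ext i c
  have hc := c.isLt
  simp only [Matrix.of_apply, OSw2, Matrix.one_apply]
  congr 1
  rw [Fin.ext_iff, eq_iff_iff]
  obtain ⟨i, hi⟩ := i
  rcases Nat.lt_or_ge (i+1) d with hid | hid
  · have := hm i hid
    rw [hqa i hid]
    simp only
    omega
  · have : i = d - 1 := by omega
    subst this
    rw [hql]
    simp only
    omega

lemma OSR_functional_pos (n d : ℕ) (f : OS n →ₗ[ℚ] ℚ) (x : OS n)
    (h : ∀ σ ∈ OSG n n, f (OSperm n σ x) ≠ 0 → f (OSperm n σ x) = 1)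
    (h1 : f (OSperm n 1 x) ≠ 0) : f (OSR n n x) ≠ 0 := by
  rw [OSR_apply, map_sum]
  apply ne_of_gt
  apply Finset.sum_pos'
  · intro σ hσ
    by_cases hc : f (OSperm n σ x) = 0
    · exact hc.ge
    · rw [h σ hσ hc]; norm_num
  · exact ⟨1, OSG_one n n, by rw [h 1 (OSG_one n n) h1]; norm_num⟩

/-- The sequence of values of a permutation read from the top. -/
def OSs (n : ℕ) (σ : Equiv.Perm (Fin (n+1))) (i : ℕ) : ℕ := (σ (OSv n (n - i))).val

lemma OSs_facts (n : ℕ) (σ : Equiv.Perm (Fin (n+1))) (hσ : σ ∈ OSG n n) :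
    OSs n σ 0 = n ∧ (∀ i, OSs n σ i ≤ n) ∧
    (∀ i j, i ≤ n → j ≤ n → OSs n σ i = OSs n σ j → i = j) := by
  refine ⟨?_, ?_, ?_⟩
  · have hv : (OSv n n).val = n := OSv_val le_rfl
    rw [OSs, Nat.sub_zero, mem_OSG.1 hσ _ hv.ge, hv]
  · intro i; exact Nat.le_of_lt_succ (σ (OSv n (n - i))).isLt
  · intro i j hi hj h
    have h1 := σ.injective (Fin.ext h)
    by_contra hc
    exact OSv_ne (n := n) (i := n - i) (j := n - j) (by omega) (by omega) (by omega) h1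

lemma OSp_val (n d : ℕ) (hd : d ≤ n) (w : ℕ → Fin d → ℚ) (f : OS n →ₗ[ℚ] ℚ)
    (hf : ∀ a b : Fin d → Fin (n+1), (∀ i, a i ≠ b i) →
      f ((List.ofFn fun i => eOS n (a i) (b i)).prod) =
        Matrix.det (Matrix.of fun i => w (min (a i).val (b i).val)))
    (σ : Equiv.Perm (Fin (n+1))) : f (OSperm n σ (OSp n n d)) =
      Matrix.det (Matrix.of fun i : Fin d => w (min (OSs n σ i) (OSs n σ (i+1)))) := by
  rw [OSp_ofFn n n d hd, map_list_prod, List.map_ofFn]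
  have := hf (fun i => σ (OSv n (n - i))) (fun i => σ (OSv n (n - (i + 1)))) (by
    intro i h
    have := i.isLt
    exact OSv_ne (by omega) (by omega) (by omega) (σ.injective h))
  refine Eq.trans ?_ this
  congr 3
  funext i
  exact OSperm_e n σ _ _

lemma OSq_val (n d : ℕ) (hd : d + 1 ≤ n) (hd1 : 1 ≤ d) (w : ℕ → Fin d → ℚ) (f : OS n →ₗ[ℚ] ℚ)
    (hf : ∀ a b : Fin d → Fin (n+1), (∀ i, a i ≠ b i) →
      f ((List.ofFn fun i => eOS n (a i) (b i)).prod) =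
        Matrix.det (Matrix.of fun i => w (min (a i).val (b i).val)))
    (σ : Equiv.Perm (Fin (n+1))) : f (OSperm n σ (OSq n n d)) =
      Matrix.det (Matrix.of fun i : Fin d =>
        w (min (OSs n σ (OSqa n d i)) (OSs n σ (OSqa n d i+1)))) := by
  rw [OSq_ofFn n d hd hd1, map_list_prod, List.map_ofFn]
  have := hf (fun i => σ (OSv n (n - OSqa n d i))) (fun i => σ (OSv n (n - (OSqa n d i + 1)))) (by
    intro i h
    have : OSqa n d i ≤ d := by
      have := i.isLt
      simp only [OSqa]; split_ifs <;> omega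
    exact OSv_ne (by omega) (by omega) (by omega) (σ.injective h))
  refine Eq.trans ?_ this
  congr 3
  funext i
  exact OSperm_e n σ _ _

lemma OSs_one (n i : ℕ) : OSs n 1 i = n - i := by
  rw [OSs, Equiv.Perm.one_apply, OSv_val (by omega)]

lemma OS_f1 (n d : ℕ) (hd : d ≤ n) : ∃ f : OS n →ₗ[ℚ] ℚ, f (OSR n n (OSp n n d)) ≠ 0 ∧
    (1 ≤ d → d + 1 ≤ n → f (OSR n n (OSq n n d)) = 0) := by
  obtain ⟨f, hf⟩ := OS_functional n d (OSw1 n d)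
  refine ⟨f, ?_, ?_⟩
  · apply OSR_functional_pos n d
    · intro σ hσ
      obtain ⟨s0, s1, s2⟩ := OSs_facts n σ hσ
      rw [OSp_val n d hd _ f hf]
      exact comb_p n d _ s0 s1 s2 hd
    · rw [OSp_val n d hd _ f hf]
      convert one_ne_zero (α := ℚ)
      convert Matrix.det_one (n := Fin d) (R := ℚ)
      ext i c
      have := i.isLt
      simp only [Matrix.of_apply, OSw1, Matrix.one_apply, OSs_one]
      congr 1
      rw [Fin.ext_iff, eq_iff_iff]
      omega
  · intro hd1 hd2
    rw [OSR_apply, map_sum]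
    apply Finset.sum_eq_zero
    intro σ hσ
    obtain ⟨s0, s1, s2⟩ := OSs_facts n σ hσ
    rw [OSq_val n d hd2 hd1 _ f hf]
    exact comb_q1 n d _ s0 s1 s2 hd2 hd1

lemma OS_f2 (n d : ℕ) (hd : d + 1 ≤ n) (hd1 : 1 ≤ d) : OSR n n (OSq n n d) ≠ 0 := by
  obtain ⟨f, hf⟩ := OS_functional n d (OSw2 n d)
  have : f (OSR n n (OSq n n d)) ≠ 0 := by
    apply OSR_functional_pos n d
    · intro σ hσ
      obtain ⟨s0, s1, s2⟩ := OSs_facts n σ hσ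
      rw [OSq_val n d hd hd1 _ f hf]
      exact comb_q2 n d _ s0 s1 s2 hd hd1
    · rw [OSq_val n d hd hd1 _ f hf]
      convert one_ne_zero (α := ℚ)
      convert Matrix.det_one (n := Fin d) (R := ℚ)
      ext i c
      have := i.isLt
      have := c.isLt
      simp only [Matrix.of_apply, OSw2, Matrix.one_apply, OSs_one, OSqa]
      congr 1
      rw [Fin.ext_iff, eq_iff_iff]
      split_ifs <;> omega
  intro h
  rw [h, map_zero] at this
  exact this rfl

/-- For every integer `n ≥ 2`: the degree-`0` graded piece of `OS_n^{S_n}`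
has dimension `1`, the degree-`d` pieces for `1 ≤ d ≤ n−1` have dimension `2`, the degree-`n`
piece has dimension `1`, and the pieces of degree `> n` vanish; i.e. the Hilbert–Poincaré
polynomial of `OS_n^{S_n}` is `(1+t)(1+t+⋯+t^{n−1})`. -/
theorem OSinv_hilbert_series (n : ℕ) (hn : 2 ≤ n) :
    Module.finrank ℚ (OSinvDeg n 0) = 1 ∧
    (∀ d : ℕ, 1 ≤ d → d ≤ n - 1 → Module.finrank ℚ (OSinvDeg n d) = 2) ∧
    Module.finrank ℚ (OSinvDeg n n) = 1 ∧
    (∀ d : ℕ, n < d → OSinvDeg n d = ⊥) := by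
  have hone : ∀ d ≤ n, OSq n n d = 0 → Module.finrank ℚ (OSinvDeg n d) = 1 := by
    intro d hd hq
    obtain ⟨f, hf, -⟩ := OS_f1 n d hd
    have hp : OSR n n (OSp n n d) ≠ 0 := by
      intro h; rw [h, map_zero] at hf; exact hf rfl
    rw [OSinvDeg_eq, hq, map_zero, Submodule.span_insert, Submodule.span_zero_singleton, sup_bot_eq]
    exact finrank_span_singleton hp
  refine ⟨hone 0 (by omega) (by simp [OSq]), ?_, hone n le_rfl (OSq_zero n n n le_rfl), ?_⟩
  · intro d hd1 hd2
    obtain ⟨f, hf, hf'⟩ := OS_f1 n d (by omega)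
    have hq := OS_f2 n d (by omega) hd1
    have hli : LinearIndependent ℚ ![OSR n n (OSp n n d), OSR n n (OSq n n d)] := by
      rw [LinearIndependent.pair_iff]
      intro s t hst
      have h1 := congrArg f hst
      rw [map_add, map_smul, map_smul, hf' hd1 (by omega), map_zero, smul_zero, add_zero] at h1
      have hs : s = 0 := (smul_eq_zero.1 h1).resolve_right hf
      rw [hs, zero_smul, zero_add] at hst
      exact ⟨hs, (smul_eq_zero.1 hst).resolve_right hq⟩
    have := finrank_span_eq_card hli
    rw [OSinvDeg_eq]
    rw [Matrix.range_cons_cons_empty] at this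
    simpa using this
  · intro d hd
    rw [OSinvDeg_eq, OSp_zero n n d hd, OSq_zero n n d hd.le]
    simp

end
end
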